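/- arXiv:2105.02496 — 5 statements merged into one kernel-verified Lean document; each statement's English description precedes it below -/
import Mathlib

section
/- Let G be a finite connected graph and let H be a subgraph of G containing at least one edge. Then e(L(G)) − e(L(H)) ≥ e(G) − e(H). -/
open SimpleGraph

/-- A bundled simple graph: a vertex type together with a simple graph on it. -/
structure FGraph where
  V : Type
  G : SimpleGraph V

/-- The line graph of a bundled graph: the vertices are the edges of `G`, two distinct
edges being adjacent iff they share an endpoint. -/
def FGraph.line (X : FGraph) : FGraph := ⟨X.G.edgeSet, X.G.lineGraph⟩

/-- The `k`-fold iterated line graph `L^k(G)`. -/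
def FGraph.iter (X : FGraph) (k : ℕ) : FGraph := FGraph.line^[k] X

/-- The number of vertices `n(G)`. -/
noncomputable def FGraph.n (X : FGraph) : ℕ := Nat.card X.V

/-- The number of edges `e(G)`. -/
noncomputable def FGraph.e (X : FGraph) : ℕ := Nat.card X.G.edgeSet

/-- The degree of a vertex. -/
noncomputable def FGraph.deg (X : FGraph) (v : X.V) : ℕ := Nat.card (X.G.neighborSet v)

/-- The maximum degree `Δ(G)`. -/
noncomputable def FGraph.maxDeg (X : FGraph) : ℕ := sSup (Set.range X.deg)

/-- The minimum degree `δ(G)`. -/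
noncomputable def FGraph.minDeg (X : FGraph) : ℕ := sInf (Set.range X.deg)

/-- The average degree `d(G) = 2e(G)/n(G)`, as a rational number. -/
noncomputable def FGraph.avgDeg (X : FGraph) : ℚ := 2 * (X.e : ℚ) / (X.n : ℚ)

/-- A graph is prolific if it is connected and isomorphic to no path graph `P_k`,
to no cycle graph `C_k`, and not to the star `K_{1,3}`. -/
def FGraph.Prolific (X : FGraph) : Prop :=
  X.G.Connected ∧
  (∀ k : ℕ, IsEmpty (X.G ≃g pathGraph k)) ∧
  (∀ k : ℕ, IsEmpty (X.G ≃g cycleGraph k)) ∧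
  IsEmpty (X.G ≃g completeBipartiteGraph (Fin 1) (Fin 3))

/-!
For a connected graph `Γ` and a nonempty set `S` of vertices, fix a root in `S` and send each vertex
outside `S` to the first edge of a shortest walk to the root. This map is injective, because the
vertex is the endpoint of that edge farther from the root, and its values are not edges inside `S`.
Hence `e(Γ) - e(Δ) ≥ n(Γ) - n(Δ)` for every nonempty subgraph `Δ` of `Γ`; apply this to the
line graphs `L(H) ⊆ L(G)`, whose vertices are the edges of `H` and `G`.
-/

section Subgraph

variable {V W : Type*} {G : SimpleGraph V} {H : SimpleGraph W}

theorem exists_adj_dist_lt {u v : V} (h : G.Reachable u v) (hne : u ≠ v) :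
    ∃ w, G.Adj u w ∧ G.dist w v < G.dist u v := by
  obtain ⟨p, hp⟩ := h.exists_walk_length_eq_dist
  cases p with
  | nil => exact absurd rfl hne
  | cons hadj q =>
    refine ⟨_, hadj, ?_⟩
    rw [← hp, Walk.length_cons]
    exact Nat.lt_succ_of_le (dist_le q)

theorem encard_compl_le_encard_edges_not_subset (hG : G.Preconnected) {s : Set V}
    (hs : s.Nonempty) : sᶜ.encard ≤ {e ∈ G.edgeSet | ¬ (e : Set V) ⊆ s}.encard := by
  obtain ⟨r, hr⟩ := hs
  have : Nonempty V := ⟨r⟩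
  have exists_parent : ∀ v ∉ s, ∃ w, G.Adj v w ∧ G.dist w r < G.dist v r :=
    fun v hv => exists_adj_dist_lt (hG v r) (ne_of_mem_of_not_mem hr hv).symm
  choose! parent hparent using exists_parent
  refine Set.encard_le_encard_of_injOn (f := fun v => s(v, parent v)) ?_ ?_
  · exact fun v hv => ⟨(hparent v hv).1, fun hsub => hv (hsub (Sym2.mem_mk_left v _))⟩
  · intro v hv w hw hvw
    rcases Sym2.eq_iff.mp hvw with ⟨h, -⟩ | ⟨hvp, hpw⟩
    · exact h
    · have hlt_v := (hparent v hv).2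
      have hlt_w := (hparent w hw).2
      rw [hpw] at hlt_v
      rw [← hvp] at hlt_w
      exact absurd hlt_v hlt_w.asymm

theorem encard_edgeSet_add_encard_compl_range_le [Nonempty W] (hG : G.Preconnected)
    (f : Copy H G) :
    H.edgeSet.encard + (Set.range f)ᶜ.encard ≤ G.edgeSet.encard := by
  have hinj : Function.Injective f := f.injective
  have himage : Sym2.map f '' H.edgeSet ⊆ {e ∈ G.edgeSet | (e : Set V) ⊆ Set.range f} := by
    rintro _ ⟨e, he, rfl⟩
    refine ⟨f.toHom.map_mem_edgeSet he, ?_⟩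
    rw [Sym2.coe_map]
    exact Set.image_subset_range f e
  calc H.edgeSet.encard + (Set.range f)ᶜ.encard
      = (Sym2.map f '' H.edgeSet).encard + (Set.range f)ᶜ.encard := by
        rw [(Sym2.map.injective hinj).encard_image]
    _ ≤ {e ∈ G.edgeSet | (e : Set V) ⊆ Set.range f}.encard +
          {e ∈ G.edgeSet | ¬ (e : Set V) ⊆ Set.range f}.encard :=
        add_le_add (Set.encard_le_encard himage)
          (encard_compl_le_encard_edges_not_subset hG (Set.range_nonempty f))
    _ = G.edgeSet.encard :=
        (add_comm _ _).trans
          (Set.encard_sdiff_add_encard_inter G.edgeSet {e | (e : Set V) ⊆ Set.range f})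

end Subgraph

section LineGraph

variable {V : Type*} {G H : SimpleGraph V}

theorem lineGraph_reachable_of_mem {e₁ e₂ : G.edgeSet} {v : V} (h₁ : v ∈ (e₁ : Sym2 V))
    (h₂ : v ∈ (e₂ : Sym2 V)) : G.lineGraph.Reachable e₁ e₂ := by
  by_cases hne : e₁ = e₂
  · exact hne ▸ Reachable.refl e₁
  · exact (lineGraph_adj_iff_exists.mpr ⟨hne, v, h₁, h₂⟩).reachable

theorem lineGraph_reachable_of_walk {u v : V} (p : G.Walk u v) {e₁ e₂ : G.edgeSet}
    (h₁ : u ∈ (e₁ : Sym2 V)) (h₂ : v ∈ (e₂ : Sym2 V)) : G.lineGraph.Reachable e₁ e₂ := by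
  induction p generalizing e₁ with
  | nil => exact lineGraph_reachable_of_mem h₁ h₂
  | @cons u w _ hadj _ ih =>
    have hfirst : G.lineGraph.Reachable e₁ ⟨s(u, w), hadj⟩ :=
      lineGraph_reachable_of_mem h₁ (Sym2.mem_mk_left u w)
    exact hfirst.trans (ih (Sym2.mem_mk_right u w) h₂)

theorem lineGraph_preconnected (hG : G.Preconnected) : G.lineGraph.Preconnected := by
  intro e₁ e₂
  obtain ⟨p⟩ := hG (e₁ : Sym2 V).out.1 (e₂ : Sym2 V).out.1
  exact lineGraph_reachable_of_walk p (Sym2.out_fst_mem _) (Sym2.out_fst_mem _)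

theorem image_val_compl_range_lineGraph_ofLE (hle : H ≤ G) :
    Subtype.val '' (Set.range (Copy.ofLE H G hle).lineGraph)ᶜ = G.edgeSet \ H.edgeSet := by
  have hval (e : H.edgeSet) : ((Copy.ofLE H G hle).lineGraph e : Sym2 V) = e :=
    congrFun Sym2.map_id e.val
  have hrange : Subtype.val '' Set.range (Copy.ofLE H G hle).lineGraph = H.edgeSet := by
    rw [← Set.range_comp]
    exact (congrArg Set.range (funext hval)).trans Subtype.range_coe
  rw [Set.image_compl_eq_range_sdiff_image Subtype.val_injective, hrange, Subtype.range_coe]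

theorem line_graph_edge_diff_general (hG : G.Preconnected) (hle : H ≤ G)
    (hne : H.edgeSet.Nonempty) :
    H.lineGraph.edgeSet.encard + (G.edgeSet \ H.edgeSet).encard ≤
      G.lineGraph.edgeSet.encard := by
  have : Nonempty H.edgeSet := hne.to_subtype
  rw [← image_val_compl_range_lineGraph_ofLE hle, Subtype.val_injective.encard_image]
  exact encard_edgeSet_add_encard_compl_range_le (lineGraph_preconnected hG)
    (Copy.ofLE H G hle).lineGraph

end LineGraph

/-- If `G` is connected and `H` is a subgraph of `G` with at least one edge, then
`e(L(G)) - e(L(H)) ≥ e(G) - e(H)`. -/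
theorem line_graph_edge_diff {V : Type} [Finite V] {G H : SimpleGraph V}
    (hc : G.Connected) (hle : H ≤ G) (hne : H.edgeSet.Nonempty) :
    (Nat.card G.lineGraph.edgeSet : ℤ) - (Nat.card H.lineGraph.edgeSet : ℤ) ≥
      (Nat.card G.edgeSet : ℤ) - (Nat.card H.edgeSet : ℤ) := by
  have h := line_graph_edge_diff_general hc.preconnected hle hne
  simp only [← (Set.toFinite _).cast_ncard_eq] at h
  have hsdiff := Set.ncard_sdiff_add_ncard_of_subset (edgeSet_subset_edgeSet.mpr hle)
  simp only [Nat.card_coe_set_eq]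
  norm_cast at h
  omega
end

section
/- Let G be a prolific graph. Then e(L(G)) ≥ e(G), and equality holds if and only if G is a subdivision of K_{1,3}, i.e. G is a tree with exactly one vertex of degree 3 and all other vertices of degree 1 or 2. -/
open SimpleGraph

/-!
Counting pairs of incident edges at their common endpoint gives `e(L(G)) = ∑ v, (deg v).choose 2`.
By Pascal's rule and the handshake lemma,
`e(L(G)) - e(G) = (e(G) - (n(G) - 1)) + (∑ v, (deg v - 1).choose 2 - 1)`
when no vertex is isolated. The first term is nonnegative for connected `G` and vanishes exactly
for trees; the second is nonnegative once some degree is at least `3`, and vanishes exactly when a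
single vertex has degree `3` and the others degree `1` or `2`. A connected graph of maximum degree
at most `2` is a cycle or a path: a copy of a cycle, or a longest path of an acyclic graph, already
contains all edges at each of its vertices.
-/

section LineGraph

variable {V : Type*} [Fintype V] (G : SimpleGraph V) [DecidableRel G.Adj]

theorem card_edgeSet_lineGraph :
    Nat.card G.lineGraph.edgeSet = ∑ v, (G.degree v).choose 2 := by
  classical
  let edgesAt (v : V) : Finset G.edgeSet := (G.incidenceFinset v).subtype (· ∈ G.edgeSet)
  have mem_edgesAt {v : V} {e : G.edgeSet} : e ∈ edgesAt v ↔ v ∈ (e : Sym2 V) := by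
    simp [edgesAt, incidenceSet]
  have card_edgesAt (v : V) : (edgesAt v).card = G.degree v := by
    rw [Finset.card_subtype, Finset.filter_true_of_mem fun e he ↦ G.incidenceSet_subset v
      ((G.mem_incidenceFinset v e).mp he), card_incidenceFinset_eq_degree]
  let pairsAt (v : V) : Finset (Sym2 G.edgeSet) := (edgesAt v).offDiag.image Sym2.mk.uncurry
  have mem_pairsAt {v : V} {e₁ e₂ : G.edgeSet} :
      s(e₁, e₂) ∈ pairsAt v ↔ e₁ ≠ e₂ ∧ v ∈ (e₁ : Sym2 V) ∧ v ∈ (e₂ : Sym2 V) := by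
    simp only [pairsAt, Finset.mem_image, Finset.mem_offDiag, mem_edgesAt, Prod.exists,
      Function.uncurry_apply_pair, Sym2.eq_iff]
    grind
  have edgeFinset_eq : G.lineGraph.edgeFinset = Finset.univ.biUnion pairsAt := by
    ext ⟨e₁, e₂⟩
    simp [mem_pairsAt, lineGraph_adj_iff_exists]
  have disjoint_pairsAt : Pairwise fun v w ↦ Disjoint (pairsAt v) (pairsAt w) := by
    intro v w hvw
    refine Finset.disjoint_left.mpr fun p ↦ ?_
    induction p with | _ e₁ e₂ => ?_
    intro hv hw
    obtain ⟨hne, hv₁, hv₂⟩ := mem_pairsAt.mp hv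
    obtain ⟨-, hw₁, hw₂⟩ := mem_pairsAt.mp hw
    exact hne (Subtype.ext (Sym2.eq_of_ne_mem hvw hv₁ hw₁ hv₂ hw₂))
  rw [Nat.card_eq_fintype_card, ← edgeFinset_card, edgeFinset_eq,
    Finset.card_biUnion fun v _ w _ hvw ↦ disjoint_pairsAt hvw]
  exact Finset.sum_congr rfl fun v _ ↦ by rw [Sym2.card_image_offDiag, card_edgesAt]

variable {G}

theorem card_edgeSet_lineGraph_add_card_vert (hG : ∀ v, 0 < G.degree v) :
    Nat.card G.lineGraph.edgeSet + Nat.card V =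
      2 * Nat.card G.edgeSet + ∑ v, (G.degree v - 1).choose 2 := by
  have pascal (v : V) :
      (G.degree v).choose 2 + 1 = G.degree v + (G.degree v - 1).choose 2 := by
    obtain ⟨d, hd⟩ := Nat.exists_eq_add_of_lt (hG v)
    rw [hd, zero_add, Nat.add_sub_cancel, Nat.choose_succ_succ' d 1, Nat.choose_one_right]
    ring
  calc Nat.card G.lineGraph.edgeSet + Nat.card V
      = ∑ v, ((G.degree v).choose 2 + 1) := by
        rw [card_edgeSet_lineGraph, Finset.sum_add_distrib, Nat.card_eq_fintype_card,
          Fintype.card_eq_sum_ones]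
    _ = ∑ v, (G.degree v + (G.degree v - 1).choose 2) := Finset.sum_congr rfl fun v _ ↦ pascal v
    _ = 2 * Nat.card G.edgeSet + ∑ v, (G.degree v - 1).choose 2 := by
        rw [Finset.sum_add_distrib, sum_degrees_eq_twice_card_edges, edgeFinset_card,
          Nat.card_eq_fintype_card]

end LineGraph

theorem sum_eq_one_iff_existsUnique {ι : Type*} [Fintype ι] {f : ι → ℕ} :
    ∑ i, f i = 1 ↔ (∃! i, f i = 1) ∧ ∀ i, f i ≠ 1 → f i = 0 := by
  classical
  constructor
  · intro hsum
    obtain ⟨i, -, hi⟩ := Finset.exists_ne_zero_of_sum_ne_zero (hsum.trans_ne one_ne_zero)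
    have hsplit := Finset.add_sum_erase Finset.univ f (Finset.mem_univ i)
    have hrest : ∑ j ∈ Finset.univ.erase i, f j = 0 := by omega
    simp only [Finset.sum_eq_zero_iff, Finset.mem_erase, Finset.mem_univ, and_true] at hrest
    grind [ExistsUnique]
  · rintro ⟨⟨i, hi, hunique⟩, hzero⟩
    rw [Fintype.sum_eq_single i fun j hj ↦ hzero j (mt (hunique j) hj), hi]

theorem sum_choose_two_pred_eq_one_iff {ι : Type*} [Fintype ι] {d : ι → ℕ}
    (hd : ∀ i, 0 < d i) :
    ∑ i, (d i - 1).choose 2 = 1 ↔ (∃! i, d i = 3) ∧ ∀ i, d i ≠ 3 → d i = 1 ∨ d i = 2 := by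
  have eq_one_iff (i : ι) : (d i - 1).choose 2 = 1 ↔ d i = 3 := by
    rw [Nat.choose_eq_one_iff]
    omega
  have eq_zero_iff (i : ι) : (d i - 1).choose 2 = 0 ↔ d i = 1 ∨ d i = 2 := by
    have := hd i
    rw [Nat.choose_eq_zero_iff]
    omega
  simp only [sum_eq_one_iff_existsUnique, eq_one_iff, eq_zero_iff, ne_eq]

section MaxDegreeTwo

variable {V W : Type*} {G : SimpleGraph V} {H : SimpleGraph W}

theorem subgraph_eq_top_of_neighborSet_subset (hG : G.Preconnected) {S : G.Subgraph}
    (hS : S.verts.Nonempty) (hnbr : ∀ v ∈ S.verts, G.neighborSet v ⊆ S.neighborSet v) :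
    S = ⊤ := by
  obtain ⟨u, hu⟩ := hS
  have mem_verts (v : V) : v ∈ S.verts := by
    obtain ⟨p⟩ := hG u v
    induction p with
    | nil => exact hu
    | cons hadj _ ih => exact ih (hnbr _ hu hadj).snd_mem
  ext v w
  · simp [mem_verts]
  · exact ⟨fun h ↦ h.adj_sub, fun h ↦ hnbr v (mem_verts v) h⟩

theorem nonempty_iso_of_copy_of_degree_le [Nonempty W] [H.LocallyFinite] [G.LocallyFinite]
    (hG : G.Preconnected) (f : Copy H G) (hdeg : ∀ a, G.degree (f a) ≤ H.degree a) :
    Nonempty (G ≃g H) := by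
  suffices htop : f.toSubgraph = ⊤ by
    exact ⟨(f.isoToSubgraph.trans (htop ▸ Subgraph.topIso)).symm⟩
  refine subgraph_eq_top_of_neighborSet_subset hG ⟨f (Classical.arbitrary W), by simp⟩ ?_
  rintro _ ⟨a, -, rfl⟩ w hw
  have hnbr : (H.neighborFinset a).map f.toEmbedding = G.neighborFinset (f a) := by
    refine Finset.eq_of_subset_of_card_le ?_ (by simpa using hdeg a)
    intro _ hx
    obtain ⟨b, hb, rfl⟩ := Finset.mem_map.mp hx
    rw [mem_neighborFinset] at hb ⊢
    exact f.toHom.map_adj hb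
  obtain ⟨b, hb, rfl⟩ := Finset.mem_map.mp (hnbr ▸ (G.mem_neighborFinset _ _).mpr hw)
  exact ⟨a, b, (H.mem_neighborFinset _ _).mp hb, rfl, rfl⟩

theorem exists_iso_cycleGraph_of_not_isAcyclic [G.LocallyFinite] (hG : G.Preconnected)
    (hdeg : ∀ v, G.degree v ≤ 2) (hcyc : ¬ G.IsAcyclic) : ∃ n, Nonempty (G ≃g cycleGraph n) := by
  simp only [isAcyclic_iff_free_cycleGraph, not_forall, Free, not_not] at hcyc
  obtain ⟨n, hn, ⟨f⟩⟩ := hcyc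
  obtain ⟨m, rfl⟩ := Nat.exists_eq_add_of_le' hn
  exact ⟨m + 3, nonempty_iso_of_copy_of_degree_le hG f fun a ↦
    (hdeg _).trans_eq cycleGraph_degree_three_le.symm⟩

theorem neighborSet_start_subset_toSubgraph_of_isAcyclic (hG : G.IsAcyclic) {u v : V}
    {p : G.Walk u v} (hp : p.IsPath)
    (hmax : ∀ (u' v' : V) (q : G.Walk u' v'), q.IsPath → q.length ≤ p.length) :
    G.neighborSet u ⊆ p.toSubgraph.neighborSet u := by
  intro w hw
  have hsupp : w ∈ p.support := by
    by_contra hnot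
    have := hmax w v (p.cons hw.symm) (hp.cons hnot)
    grind [Walk.length_cons]
  have hnil : ¬ p.Nil := fun h ↦ hw.ne' (by simpa [Walk.nil_iff_support_eq.mp h] using hsupp)
  rw [hG.eq_snd_of_adj_start hp hw hsupp]
  exact p.toSubgraph_adj_snd hnil

theorem exists_iso_pathGraph_of_isAcyclic [Finite G.edgeSet] [G.LocallyFinite]
    (hG : G.Connected) (hdeg : ∀ v, G.degree v ≤ 2) (hacyc : G.IsAcyclic) :
    ∃ n, Nonempty (G ≃g pathGraph n) := by
  classical
  have := hG.nonempty
  obtain ⟨u, v, p, hp, hmax⟩ := Walk.exists_isPath_forall_isPath_length_le_length G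
  suffices htop : p.toSubgraph = ⊤ by
    exact ⟨_, ⟨(hp.pathGraphIsoToSubgraph.trans (htop ▸ Subgraph.topIso)).symm⟩⟩
  refine subgraph_eq_top_of_neighborSet_subset hG.preconnected ⟨u, by simp⟩ fun w hw ↦ ?_
  obtain ⟨i, rfl, hi⟩ := Walk.mem_support_iff_exists_getVert.mp (p.mem_verts_toSubgraph.mp hw)
  obtain rfl | hi₀ := eq_or_ne i 0
  · rw [Walk.getVert_zero]
    exact neighborSet_start_subset_toSubgraph_of_isAcyclic hacyc hp hmax
  obtain rfl | hi₁ := hi.eq_or_lt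
  · rw [Walk.getVert_length, ← p.toSubgraph_reverse]
    exact neighborSet_start_subset_toSubgraph_of_isAcyclic hacyc hp.reverse
      (by simpa using hmax)
  · refine (Set.eq_of_subset_of_ncard_le (p.toSubgraph.neighborSet_subset _) ?_).ge
    rw [hp.ncard_neighborSet_toSubgraph_internal_eq_two hi₀ hi₁, Set.ncard_eq_toFinset_card']
    exact hdeg _

theorem exists_three_le_degree [Finite G.edgeSet] [G.LocallyFinite] (hG : G.Connected)
    (hpath : ∀ n, IsEmpty (G ≃g pathGraph n)) (hcycle : ∀ n, IsEmpty (G ≃g cycleGraph n)) :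
    ∃ v, 3 ≤ G.degree v := by
  by_contra! hlt
  have hdeg (v : V) : G.degree v ≤ 2 := Nat.le_of_lt_succ (hlt v)
  by_cases hacyc : G.IsAcyclic
  · obtain ⟨n, hn⟩ := exists_iso_pathGraph_of_isAcyclic hG hdeg hacyc
    exact not_isEmpty_iff.mpr hn (hpath n)
  · obtain ⟨n, hn⟩ := exists_iso_cycleGraph_of_not_isAcyclic hG.preconnected hdeg hacyc
    exact not_isEmpty_iff.mpr hn (hcycle n)

end MaxDegreeTwo

theorem line_graph_edges_ge_general {V : Type*} [Finite V] {G : SimpleGraph V}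
    (hG : G.Connected) (hpath : ∀ k : ℕ, IsEmpty (G ≃g pathGraph k))
    (hcycle : ∀ k : ℕ, IsEmpty (G ≃g cycleGraph k)) :
    Nat.card G.lineGraph.edgeSet ≥ Nat.card G.edgeSet ∧
      (Nat.card G.lineGraph.edgeSet = Nat.card G.edgeSet ↔
        G.IsTree ∧ (∃! v : V, Nat.card (G.neighborSet v) = 3) ∧
          ∀ v : V, Nat.card (G.neighborSet v) ≠ 3 →
            Nat.card (G.neighborSet v) = 1 ∨ Nat.card (G.neighborSet v) = 2) := by
  classical
  have := Fintype.ofFinite V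
  obtain ⟨u, hu⟩ := exists_three_le_degree hG hpath hcycle
  have : Nontrivial V := G.nontrivial_of_degree_ne_zero (by omega : G.degree u ≠ 0)
  have hpos (v : V) : 0 < G.degree v := hG.preconnected.degree_pos_of_nontrivial v
  have hcount := card_edgeSet_lineGraph_add_card_vert hpos
  have hcard := hG.card_vert_le_card_edgeSet_add_one
  have hexcess : 0 < ∑ v, (G.degree v - 1).choose 2 :=
    Finset.sum_pos' (fun _ _ ↦ Nat.zero_le _) ⟨u, Finset.mem_univ u, Nat.choose_pos (by omega)⟩
  simp only [Nat.card_eq_fintype_card (α := G.neighborSet _), card_neighborSet_eq_degree]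
  rw [← sum_choose_two_pred_eq_one_iff hpos, isTree_iff_connected_and_card, and_iff_right hG]
  omega

/-- For a prolific graph, `e(L(G)) ≥ e(G)`, with equality iff `G` is a subdivision of
`K_{1,3}`, i.e. a tree with exactly one vertex of degree `3` and all other vertices of
degree `1` or `2`. -/
theorem line_graph_edges_ge (X : FGraph) [Finite X.V] (hp : X.Prolific) :
    X.line.e ≥ X.e ∧
      (X.line.e = X.e ↔
        X.G.IsTree ∧ (∃! v : X.V, X.deg v = 3) ∧
          ∀ v : X.V, X.deg v ≠ 3 → X.deg v = 1 ∨ X.deg v = 2) :=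
  line_graph_edges_ge_general hp.1 hp.2.1 hp.2.2.1
end

section
/- Let G be a prolific graph. Then there exists r with 1 ≤ r ≤ 4 such that n(L^r(G)) > n(G). -/
open SimpleGraph

/-!
Write `n k` for the number of vertices of `L^k(G)`. The edge `uv` has degree `d(u) + d(v) - 2` in
`L(G)`, so counting degrees gives `2 (n (k + 2) - 2 n (k + 1) + n k) = ∑ v, (d(v) - 1) (d(v) - 2)`,
the sum being over the vertices of `L^k(G)`. Hence `n` is convex, strictly so at `k` if `L^k(G)`
has a vertex of degree at least three. Connectedness gives `n 1 - n 0 ≥ -1`. Since `G` is neither a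
path nor a cycle it has a vertex of degree at least three, and since it is not `K_{1,3}` so does
`L(G)`. The first differences of `n` are therefore at least `-1, 0, 1, 1`, and `n 4 > n 0`.
-/

section Connectivity

variable {V : Type*} {G : SimpleGraph V}

lemma eq_univ_of_forall_neighborSet_subset (hG : G.Preconnected) {S : Set V} (hne : S.Nonempty)
    (hS : ∀ v ∈ S, G.neighborSet v ⊆ S) : S = Set.univ := by
  obtain ⟨v, hv⟩ := hne
  refine Set.eq_univ_of_forall fun w ↦ by_contra fun hw ↦ ?_
  obtain ⟨d, -, hfst, hsnd⟩ := (hG v w).some.exists_boundary_dart S hv hw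
  exact hsnd (hS d.fst hfst d.adj)

lemma subgraph_eq_top_of_forall_neighborSet_subset (hG : G.Preconnected) {H : G.Subgraph}
    (hne : H.verts.Nonempty) (hH : ∀ v ∈ H.verts, G.neighborSet v ⊆ H.neighborSet v) :
    H = ⊤ := by
  have hverts : H.verts = Set.univ :=
    eq_univ_of_forall_neighborSet_subset hG hne fun v hv w hw ↦ (hH v hv hw).snd_mem
  refine top_le_iff.1 ⟨fun v _ ↦ hverts ▸ Set.mem_univ v, fun v w hvw ↦ ?_⟩
  exact hH v (hverts ▸ Set.mem_univ v) hvw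

lemma neighborSet_subset_of_degree_le_ncard {H : G.Subgraph} {v : V} [Fintype (G.neighborSet v)]
    (h : G.degree v ≤ (H.neighborSet v).ncard) : G.neighborSet v ⊆ H.neighborSet v := by
  rw [← card_neighborSet_eq_degree, ← Nat.card_eq_fintype_card, Nat.card_coe_set_eq] at h
  exact (Set.eq_of_subset_of_ncard_le (H.neighborSet_subset v) h).ge

end Connectivity

section PathsAndCycles

variable {V : Type*} {G : SimpleGraph V}

lemma neighborSet_toSubgraph_copy {W : Type*} {A : SimpleGraph W} (f : Copy A G) (x : W) :
    f.toSubgraph.neighborSet (f x) = f '' A.neighborSet x := by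
  ext w
  constructor
  · rintro ⟨a, b, hab, ha, rfl⟩
    exact ⟨b, f.injective ha ▸ hab, rfl⟩
  · rintro ⟨b, hb, rfl⟩
    exact ⟨x, b, hb, rfl, rfl⟩

lemma nonempty_iso_cycleGraph_of_isCycle [G.LocallyFinite] (hG : G.Preconnected)
    (hdeg : ∀ v, G.degree v ≤ 2) {u : V} {p : G.Walk u u} (hp : p.IsCycle) :
    Nonempty (G ≃g cycleGraph p.length) := by
  obtain ⟨n, hn⟩ := Nat.exists_eq_add_of_le' hp.three_le_length
  obtain ⟨f⟩ : cycleGraph (n + 3) ⊑ G :=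
    (cycleGraph_isContained_iff (by lia)).2 ⟨u, p, hp, hn⟩
  have htop : f.toSubgraph = ⊤ := by
    refine subgraph_eq_top_of_forall_neighborSet_subset hG ⟨f 0, 0, trivial, rfl⟩ ?_
    rintro _ ⟨x, -, rfl⟩
    refine neighborSet_subset_of_degree_le_ncard ((hdeg _).trans_eq ?_)
    calc 2 = (cycleGraph (n + 3)).degree x := cycleGraph_degree_three_le.symm
      _ = ((cycleGraph (n + 3)).neighborSet x).ncard := by
        rw [← card_neighborSet_eq_degree, ← Nat.card_eq_fintype_card, Nat.card_coe_set_eq]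
      _ = (f.toSubgraph.neighborSet (f x)).ncard := by
        rw [neighborSet_toSubgraph_copy]
        exact (Set.ncard_image_of_injective _ f.injective).symm
  have e := f.isoToSubgraph
  rw [htop] at e
  rw [hn]
  exact ⟨(e.trans Subgraph.topIso).symm⟩

lemma neighborSet_start_subset_toSubgraph (hG : G.IsAcyclic) {u v : V} {p : G.Walk u v}
    (hp : p.IsPath) (hmax : ∀ (w : V) (q : G.Walk w v), q.IsPath → q.length ≤ p.length) :
    G.neighborSet u ⊆ p.toSubgraph.neighborSet u := by
  intro w (huw : G.Adj u w)
  have hw : w ∈ p.support := by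
    by_contra hw
    have := hmax w (p.cons huw.symm) (hp.cons hw)
    grind [Walk.length_cons]
  have hnil : ¬p.Nil := by
    intro hnil
    exact huw.ne' (by simpa [Walk.nil_iff_support_eq.1 hnil] using hw)
  rw [hG.eq_snd_of_adj_start hp huw hw]
  exact p.toSubgraph_adj_snd hnil

lemma exists_nonempty_iso_pathGraph [Finite G.edgeSet] [G.LocallyFinite] (hG : G.IsTree)
    (hdeg : ∀ v, G.degree v ≤ 2) : ∃ n, Nonempty (G ≃g pathGraph n) := by
  classical
  have := hG.connected.nonempty
  obtain ⟨u, v, p, hp, hmax⟩ := Walk.exists_isPath_forall_isPath_length_le_length G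
  have hstart : G.neighborSet u ⊆ p.toSubgraph.neighborSet u :=
    neighborSet_start_subset_toSubgraph hG.isAcyclic hp fun w q ↦ hmax w v q
  have hend : G.neighborSet v ⊆ p.toSubgraph.neighborSet v := by
    rw [← p.toSubgraph_reverse]
    refine neighborSet_start_subset_toSubgraph hG.isAcyclic hp.reverse fun w q hq ↦ ?_
    exact p.length_reverse ▸ hmax w u q hq
  have htop : p.toSubgraph = ⊤ := by
    refine subgraph_eq_top_of_forall_neighborSet_subset hG.connected.preconnected
      ⟨u, p.start_mem_verts_toSubgraph⟩ fun x hx ↦ ?_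
    obtain ⟨i, rfl, hi⟩ := Walk.mem_support_iff_exists_getVert.1 (p.mem_verts_toSubgraph.1 hx)
    rcases eq_or_ne i 0 with rfl | hi₀
    · rwa [p.getVert_zero]
    rcases hi.eq_or_lt with rfl | hi
    · rwa [p.getVert_length]
    exact neighborSet_subset_of_degree_le_ncard <|
      (hdeg _).trans_eq (hp.ncard_neighborSet_toSubgraph_internal_eq_two hi₀ hi).symm
  have e := hp.pathGraphIsoToSubgraph
  rw [htop] at e
  exact ⟨p.length + 1, ⟨(e.trans Subgraph.topIso).symm⟩⟩

theorem exists_iso_pathGraph_or_iso_cycleGraph [Finite G.edgeSet] [G.LocallyFinite]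
    (hG : G.Connected) (hdeg : ∀ v, G.degree v ≤ 2) :
    ∃ n, Nonempty (G ≃g pathGraph n) ∨ Nonempty (G ≃g cycleGraph n) := by
  by_cases hacyc : G.IsAcyclic
  · obtain ⟨n, e⟩ := exists_nonempty_iso_pathGraph ⟨hG, hacyc⟩ hdeg
    exact ⟨n, .inl e⟩
  · obtain ⟨u, p, hp⟩ : ∃ u, ∃ p : G.Walk u u, p.IsCycle := by
      simpa [IsAcyclic] using hacyc
    exact ⟨p.length, .inr (nonempty_iso_cycleGraph_of_isCycle hG.preconnected hdeg hp)⟩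

end PathsAndCycles

section Stars

variable {V : Type*}

lemma eq_starGraph_of_forall_degree_le_one {G : SimpleGraph V} [G.LocallyFinite]
    (hG : G.Preconnected) {c : V} (hleaf : ∀ v, G.Adj c v → G.degree v ≤ 1) :
    G = starGraph c := by
  have hnbr : ∀ v, G.Adj c v → ∀ w, G.Adj v w → w = c := fun v hcv w hvw ↦
    Finset.card_le_one.1 (hleaf v hcv) w (by simpa) c (by simpa using hcv.symm)
  have huniv : insert c (G.neighborSet c) = Set.univ := by
    refine eq_univ_of_forall_neighborSet_subset hG (Set.insert_nonempty _ _) ?_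
    rintro v (rfl | hcv) w hvw
    · exact .inr hvw
    · exact .inl (hnbr v hcv w hvw)
  have hc : ∀ v, v = c ∨ G.Adj c v := fun v ↦ huniv.ge (Set.mem_univ v)
  ext v w
  rw [starGraph_adj]
  constructor
  · intro hvw
    exact ⟨hvw.ne, (hc v).imp_right fun hcv ↦ hnbr v hcv w hvw⟩
  · rintro ⟨hne, rfl | rfl⟩
    · exact (hc w).resolve_left hne.symm
    · exact ((hc v).resolve_left hne).symm

lemma nonempty_starGraph_iso_completeBipartiteGraph (c : V)
    [Fintype ((starGraph c).neighborSet c)] :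
    Nonempty (starGraph c ≃g completeBipartiteGraph (Fin 1) (Fin ((starGraph c).degree c))) := by
  classical
  have hmem : ∀ v, v ∈ (starGraph c).neighborSet c ↔ ¬v = c := fun v ↦ by
    simp [mem_neighborSet, starGraph_adj, eq_comm]
  let leaves : Fin ((starGraph c).degree c) ≃ {v // ¬v = c} :=
    (Fintype.equivFinOfCardEq (card_neighborSet_eq_degree _ c)).symm.trans
      (Equiv.subtypeEquivRight hmem)
  let e : Fin 1 ⊕ Fin ((starGraph c).degree c) ≃ V :=
    (Equiv.sumCongr (Equiv.ofUnique (Fin 1) {v // v = c}) leaves).trans (Equiv.sumCompl (· = c))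
  have hinl : ∀ i, e (.inl i) = c := fun _ ↦ rfl
  have hinr : ∀ j, e (.inr j) ≠ c := fun j ↦ (leaves j).2
  refine ⟨(RelIso.mk e ?_ : completeBipartiteGraph (Fin 1) (Fin _) ≃g starGraph c).symm⟩
  rintro (i | i) (j | j) <;> simp [hinl, hinr, (hinr _).symm]

end Stars

section LineGraph

variable {V : Type*}

lemma degree_lineGraph_add_two {G : SimpleGraph V} [G.LocallyFinite] [G.lineGraph.LocallyFinite]
    {u v : V} (h : G.Adj u v) :
    G.lineGraph.degree ⟨s(u, v), h⟩ + 2 = G.degree u + G.degree v := by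
  classical
  have hnbr : (G.lineGraph.neighborFinset ⟨s(u, v), h⟩).map (.subtype _) =
      (G.incidenceFinset u ∪ G.incidenceFinset v).erase s(u, v) := by
    ext e
    simp only [Finset.mem_map, mem_neighborFinset, lineGraph_adj_iff_exists, Finset.mem_erase,
      Finset.mem_union, mem_incidenceFinset, incidenceSet, Set.mem_ofPred_eq, Subtype.exists,
      Function.Embedding.coe_subtype, Sym2.mem_iff, ne_eq, Subtype.ext_iff]
    grind
  have hinter : G.incidenceFinset u ∩ G.incidenceFinset v = {s(u, v)} := by
    rw [← Finset.coe_inj]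
    simpa using G.incidenceSet_inter_incidenceSet_of_adj h
  have hmem : s(u, v) ∈ G.incidenceFinset u ∪ G.incidenceFinset v := by simp [h]
  calc
    _ = (G.incidenceFinset u ∪ G.incidenceFinset v).card + 1 := by
      rw [← card_neighborFinset_eq_degree, ← Finset.card_map (.subtype _), hnbr,
        ← Finset.card_erase_add_one hmem]
    _ = G.degree u + G.degree v := by
      rw [← Finset.card_singleton s(u, v), ← hinter, Finset.card_union_add_card_inter,
        card_incidenceFinset_eq_degree, card_incidenceFinset_eq_degree]

lemma sum_edgeSet_sum_toFinset [Fintype V] [DecidableEq V] (G : SimpleGraph V)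
    [DecidableRel G.Adj] {M : Type*} [AddCommMonoid M] (f : V → M) :
    ∑ e : G.edgeSet, ∑ v ∈ e.1.toFinset, f v = ∑ v, G.degree v • f v := by
  calc
    _ = ∑ e ∈ G.edgeFinset, ∑ v ∈ e.toFinset, f v :=
      (Finset.sum_subtype G.edgeFinset (fun _ ↦ mem_edgeFinset) fun e ↦ ∑ v ∈ e.toFinset, f v).symm
    _ = ∑ v, ∑ _e ∈ G.incidenceFinset v, f v :=
      Finset.sum_comm' (by simp [incidenceSet])
    _ = ∑ v, G.degree v • f v := by
      simp only [Finset.sum_const, card_incidenceFinset_eq_degree]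

lemma two_mul_card_edgeSet_lineGraph_add_eq_sum [Fintype V] (G : SimpleGraph V)
    [DecidableRel G.Adj] :
    2 * Nat.card G.lineGraph.edgeSet + 2 * Nat.card G.edgeSet =
      ∑ v, G.degree v * G.degree v := by
  classical
  calc
    _ = ∑ e : G.edgeSet, (G.lineGraph.degree e + 2) := by
      rw [Finset.sum_add_distrib, sum_degrees_eq_twice_card_edges, Finset.sum_const,
        Finset.card_univ, smul_eq_mul, edgeFinset_card, Nat.card_eq_fintype_card,
        Nat.card_eq_fintype_card, mul_comm 2 (Fintype.card G.edgeSet)]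
    _ = ∑ e : G.edgeSet, ∑ v ∈ e.1.toFinset, G.degree v := by
      refine Finset.sum_congr rfl ?_
      rintro ⟨⟨u, v⟩, h : G.Adj u v⟩ -
      change G.lineGraph.degree ⟨s(u, v), h⟩ + 2 = ∑ w ∈ s(u, v).toFinset, G.degree w
      rw [Sym2.toFinset_mk_eq, Finset.sum_pair h.ne, degree_lineGraph_add_two h]
    _ = ∑ v, G.degree v * G.degree v := sum_edgeSet_sum_toFinset G fun v ↦ G.degree v

lemma two_mul_second_difference_card_eq_sum [Fintype V] (G : SimpleGraph V) [DecidableRel G.Adj] :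
    2 * ((Nat.card G.lineGraph.edgeSet : ℤ) - 2 * Nat.card G.edgeSet + Nat.card V) =
      ∑ v, ((G.degree v : ℤ) - 1) * (G.degree v - 2) := by
  have hsq : 2 * (Nat.card G.lineGraph.edgeSet : ℤ) + 2 * Nat.card G.edgeSet =
      ∑ v, (G.degree v : ℤ) * G.degree v := mod_cast two_mul_card_edgeSet_lineGraph_add_eq_sum G
  have hsum : ∑ v, (G.degree v : ℤ) = 2 * Nat.card G.edgeSet := by
    classical
    rw [Nat.card_eq_fintype_card, ← edgeFinset_card]
    exact mod_cast G.sum_degrees_eq_twice_card_edges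
  have hcard : ∑ _v : V, (2 : ℤ) = 2 * Nat.card V := by simp [mul_comm]
  calc
    _ = (2 * (Nat.card G.lineGraph.edgeSet : ℤ) + 2 * Nat.card G.edgeSet) -
        3 * (2 * Nat.card G.edgeSet) + 2 * Nat.card V := by ring
    _ = ∑ v, ((G.degree v : ℤ) * G.degree v - 3 * G.degree v + 2) := by
      rw [hsq, ← hsum, ← hcard, Finset.sum_add_distrib, Finset.sum_sub_distrib, Finset.mul_sum]
    _ = _ := Finset.sum_congr rfl fun v _ ↦ by ring

lemma sub_one_mul_sub_two_nonneg (d : ℕ) : 0 ≤ ((d : ℤ) - 1) * (d - 2) := by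
  rcases lt_or_ge d 2 with hd | hd
  · interval_cases d <;> norm_num
  · have : (2 : ℤ) ≤ d := mod_cast hd
    exact mul_nonneg (by linarith) (by linarith)

lemma sub_one_mul_sub_two_pos {d : ℕ} (hd : 3 ≤ d) : 0 < ((d : ℤ) - 1) * (d - 2) := by
  have : (3 : ℤ) ≤ d := mod_cast hd
  exact mul_pos (by linarith) (by linarith)

lemma two_mul_card_edgeSet_le_card_edgeSet_lineGraph_add [Finite V] (G : SimpleGraph V) :
    2 * Nat.card G.edgeSet ≤ Nat.card G.lineGraph.edgeSet + Nat.card V := by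
  classical
  have := Fintype.ofFinite V
  have hsum : 0 ≤ ∑ v, ((G.degree v : ℤ) - 1) * (G.degree v - 2) :=
    Finset.sum_nonneg fun v _ ↦ sub_one_mul_sub_two_nonneg (G.degree v)
  rw [← two_mul_second_difference_card_eq_sum] at hsum
  lia

lemma two_mul_card_edgeSet_lt_card_edgeSet_lineGraph_add [Finite V] {G : SimpleGraph V}
    {v : V} [Fintype (G.neighborSet v)] (hv : 3 ≤ G.degree v) :
    2 * Nat.card G.edgeSet < Nat.card G.lineGraph.edgeSet + Nat.card V := by
  classical
  have := Fintype.ofFinite V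
  have hsum : 0 < ∑ v, ((G.degree v : ℤ) - 1) * (G.degree v - 2) :=
    Finset.sum_pos' (fun v _ ↦ sub_one_mul_sub_two_nonneg (G.degree v))
      ⟨v, Finset.mem_univ v, sub_one_mul_sub_two_pos (by convert hv)⟩
  rw [← two_mul_second_difference_card_eq_sum] at hsum
  lia

end LineGraph

lemma exists_three_le_degree_lineGraph {V : Type*} {G : SimpleGraph V} [G.LocallyFinite]
    [G.lineGraph.LocallyFinite] (hG : G.Preconnected)
    (hclaw : IsEmpty (G ≃g completeBipartiteGraph (Fin 1) (Fin 3)))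
    {c : V} (hc : 3 ≤ G.degree c) : ∃ e, 3 ≤ G.lineGraph.degree e := by
  by_contra! hL
  have hadd : ∀ v, G.Adj c v → G.degree c + G.degree v ≤ 4 := fun v hcv ↦ by
    rw [← degree_lineGraph_add_two hcv]
    exact Nat.add_le_add_right (Nat.le_of_lt_succ (hL _)) 2
  have hdeg : G.degree c = 3 := by
    obtain ⟨v, hcv⟩ := (G.degree_pos_iff_exists_adj c).1 (by lia)
    have hv : 0 < G.degree v := (G.degree_pos_iff_exists_adj v).2 ⟨c, hcv.symm⟩
    have := hadd v hcv
    lia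
  have hstar : G = starGraph c :=
    eq_starGraph_of_forall_degree_le_one hG fun v hcv ↦ by
      have := hadd v hcv
      lia
  subst hstar
  obtain ⟨e⟩ := nonempty_starGraph_iso_completeBipartiteGraph c
  rw [hdeg] at e
  exact hclaw.false e

theorem numVertices_index_le_four_general {V : Type*} [Finite V] {G : SimpleGraph V}
    (hG : G.Connected) (hpath : ∀ n, IsEmpty (G ≃g pathGraph n))
    (hcycle : ∀ n, IsEmpty (G ≃g cycleGraph n))
    (hclaw : IsEmpty (G ≃g completeBipartiteGraph (Fin 1) (Fin 3))) :
    Nat.card V < Nat.card G.lineGraph.lineGraph.lineGraph.edgeSet := by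
  classical
  have := Fintype.ofFinite V
  obtain ⟨v, hv⟩ : ∃ v, 3 ≤ G.degree v := by
    by_contra! hdeg
    obtain ⟨n, ⟨⟨e⟩⟩ | ⟨⟨e⟩⟩⟩ :=
      exists_iso_pathGraph_or_iso_cycleGraph hG fun v ↦ Nat.le_of_lt_succ (hdeg v)
    · exact (hpath n).false e
    · exact (hcycle n).false e
  obtain ⟨e, he⟩ := exists_three_le_degree_lineGraph hG.preconnected hclaw hv
  have hfirst : Nat.card V ≤ Nat.card G.edgeSet + 1 := hG.card_vert_le_card_edgeSet_add_one
  have hsecond₀ := two_mul_card_edgeSet_lt_card_edgeSet_lineGraph_add hv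
  have hsecond₁ := two_mul_card_edgeSet_lt_card_edgeSet_lineGraph_add he
  have hsecond₂ := two_mul_card_edgeSet_le_card_edgeSet_lineGraph_add G.lineGraph.lineGraph
  lia

/-- For a prolific graph there is `r` with `1 ≤ r ≤ 4` and `n(L^r(G)) > n(G)`. -/
theorem numVertices_index_le_four (X : FGraph) [Finite X.V] (hp : X.Prolific) :
    ∃ r : ℕ, 1 ≤ r ∧ r ≤ 4 ∧ X.n < (X.iter r).n := by
  obtain ⟨hG, hpath, hcycle, hclaw⟩ := hp
  exact ⟨4, by norm_num, le_rfl, numVertices_index_le_four_general hG hpath hcycle hclaw⟩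
end

section
/- Let G be a prolific graph. Then there exists r with 1 ≤ r ≤ 4 such that μ(L^r(G)) > μ(G), where μ denotes the matching number. -/
open SimpleGraph

/-- The matching number `μ(G)`: the maximum number of pairwise disjoint edges. -/
noncomputable def FGraph.matchNum (X : FGraph) : ℕ :=
  sSup {k | ∃ s : Set (Sym2 X.V), s ⊆ X.G.edgeSet ∧
    s.Pairwise (fun e f => ∀ v : X.V, ¬(v ∈ e ∧ v ∈ f)) ∧ s.ncard = k}

/-!
The excess `e(H) - n(H)` of a connected graph `H` is at least `-1`. Passing to the line graph
increases it by half the sum of `(deg v - 1) * (deg v - 2)`, which is positive as soon as some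
degree is at least three; among connected graphs other than the claw `K_{1,3}`, that condition
survives in the line graph. As `n(L(H)) = e(H)`, a prolific `G` satisfies
`n(L⁴(G)) ≥ n(G) - 1 + 0 + 1 + 2 = n(G) + 2`.

The line graph of a connected graph has a matching that misses at most one vertex: orient the edges
so that all in-degrees but one are even, and pair off the edges with a common head. Therefore
`2 μ(L⁴(G)) ≥ n(L⁴(G)) - 1 > n(G) ≥ 2 μ(G)`.
-/

namespace IteratedLineGraph

variable {V W : Type*}

lemma nonempty_iso_of_isContained [Finite W] {H : SimpleGraph V} {G : SimpleGraph W}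
    (h : H ⊑ G) (hV : Nat.card W ≤ Nat.card V) (hE : Nat.card G.edgeSet ≤ Nat.card H.edgeSet) :
    Nonempty (H ≃g G) := by
  obtain ⟨f⟩ := h
  have hbij : Function.Bijective f := f.injective.bijective_of_nat_card_le hV
  have hsurj := (f.mapEdgeSet.injective.bijective_of_nat_card_le hE).surjective
  refine ⟨⟨Equiv.ofBijective f hbij, fun {u v} => ⟨fun huv => ?_, fun huv => f.toHom.map_adj huv⟩⟩⟩
  obtain ⟨⟨e, he⟩, hfe⟩ := hsurj ⟨s(f u, f v), huv⟩
  have hmap : Sym2.map f e = Sym2.map f s(u, v) := congrArg Subtype.val hfe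
  rwa [Sym2.map.injective f.injective hmap] at he

lemma sum_ncard_neighborSet [Fintype V] (G : SimpleGraph V) :
    ∑ v, (G.neighborSet v).ncard = 2 * Nat.card G.edgeSet := by
  classical
  simp only [Set.ncard_eq_toFinset_card', Set.toFinset_card, card_neighborSet_eq_degree,
    Nat.card_eq_fintype_card, sum_degrees_eq_twice_card_edges, edgeFinset_card]

lemma card_edgeSet_cycleGraph (n : ℕ) : Nat.card (cycleGraph (n + 3)).edgeSet = n + 3 := by
  have h := sum_ncard_neighborSet (cycleGraph (n + 3))
  simp only [Set.ncard_eq_toFinset_card', Set.toFinset_card, card_neighborSet_eq_degree,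
    cycleGraph_degree_three_le, Finset.sum_const, Finset.card_univ, Fintype.card_fin,
    smul_eq_mul] at h
  omega

section PathOrCycle

variable {G : SimpleGraph V}

lemma exists_isHamiltonian [Finite V] [DecidableEq V] (hG : G.Connected)
    (hdeg : ∀ v, (G.neighborSet v).ncard ≤ 2) :
    ∃ (u v : V) (p : G.Walk u v), p.IsHamiltonian := by
  have := hG.nonempty
  obtain ⟨u, v, p, hp, hmax⟩ := Walk.exists_isPath_forall_isPath_length_le_length G
  refine ⟨u, v, p, hp.isHamiltonian_of_mem ?_⟩
  by_contra! ⟨w, hw⟩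
  obtain ⟨q⟩ := hG.preconnected u w
  obtain ⟨⟨⟨x, y⟩, hxy⟩, -, hx, hy⟩ :=
    q.exists_boundary_dart {z | z ∈ p.support} p.start_mem_support hw
  simp only [Set.mem_ofPred_eq] at hx hy
  obtain ⟨i, rfl, hi⟩ := p.mem_support_iff_exists_getVert.mp hx
  rcases Nat.eq_zero_or_pos i with rfl | hpos
  · have hext := hmax _ _ _ (hp.cons (h := p.getVert_zero ▸ hxy.symm) hy)
    simp at hext
  rcases hi.eq_or_lt with rfl | hlt
  · have hext := hmax _ _ _ (hp.concat hy (p.getVert_length ▸ hxy))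
    simp at hext
  · have heq : p.toSubgraph.neighborSet (p.getVert i) = G.neighborSet (p.getVert i) :=
      Set.eq_of_subset_of_ncard_le (p.toSubgraph.neighborSet_subset _)
        ((hdeg _).trans_eq (hp.ncard_neighborSet_toSubgraph_internal_eq_two hpos.ne' hlt).symm)
    have hadj : p.toSubgraph.Adj (p.getVert i) y := heq.ge hxy
    exact hy (p.mem_verts_toSubgraph.mp hadj.snd_mem)

lemma nonempty_iso_pathGraph [Finite V] (hG : G.Connected)
    (hdeg : ∀ v, (G.neighborSet v).ncard ≤ 2) {v : V} (hv : (G.neighborSet v).ncard ≠ 2) :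
    Nonempty (G ≃g pathGraph (Nat.card V)) := by
  classical
  have := Fintype.ofFinite V
  obtain ⟨a, b, p, hp⟩ := exists_isHamiltonian hG hdeg
  have hcard : p.length + 1 = Nat.card V := by
    rw [← p.length_support, hp.length_support, Nat.card_eq_fintype_card]
  have hedges : Nat.card G.edgeSet < Nat.card V := by
    have hlt : ∑ w, (G.neighborSet w).ncard < ∑ _w : V, 2 :=
      Finset.sum_lt_sum (fun w _ => hdeg w) ⟨v, Finset.mem_univ v, (hdeg v).lt_of_ne hv⟩
    rw [sum_ncard_neighborSet, Finset.sum_const, Finset.card_univ, smul_eq_mul,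
      ← Nat.card_eq_fintype_card] at hlt
    omega
  have hpath := hp.isPath.isContained_pathGraph
  rw [hcard] at hpath
  have htree := (pathGraph_connected p.length).card_vert_le_card_edgeSet_add_one
  rw [hcard, Nat.card_fin] at htree
  obtain ⟨φ⟩ := nonempty_iso_of_isContained hpath (by simp) (by omega)
  exact ⟨φ.symm⟩

lemma nonempty_iso_cycleGraph [Finite V] (hG : G.Connected)
    (hdeg : ∀ v, (G.neighborSet v).ncard = 2) : Nonempty (G ≃g cycleGraph (Nat.card V)) := by
  classical
  have := Fintype.ofFinite V
  obtain ⟨v⟩ := hG.nonempty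
  have hne : (G.neighborSet v).Nonempty := Set.nonempty_of_ncard_ne_zero (by simp [hdeg v])
  have hcycles : G.IsCycles := fun w _ => hdeg w
  obtain ⟨p, hp, hverts⟩ :=
    hcycles.exists_cycle_toSubgraph_verts_eq_connectedComponentSupp
      (c := G.connectedComponentMk v) rfl hne
  have hspan (w : V) : w ∈ p.tail.support := by
    have hw : w ∈ p.toSubgraph.verts :=
      hverts ▸ ConnectedComponent.sound (hG.preconnected w v)
    rw [p.mem_verts_toSubgraph, Walk.mem_support_iff] at hw
    rw [Walk.support_tail_of_not_nil p hp.not_nil]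
    exact hw.elim (· ▸ Walk.end_mem_tail_support hp.not_nil) id
  have hham : p.IsHamiltonianCycle := ⟨hp, hp.isPath_tail.isHamiltonian_of_mem hspan⟩
  have hlen : p.length = Nat.card V := hham.length_eq.trans Nat.card_eq_fintype_card.symm
  have hthree := hp.three_le_length
  have hsub : cycleGraph (Nat.card V) ⊑ G :=
    (cycleGraph_isContained_iff (by omega)).mpr ⟨v, p, hp, hlen⟩
  have hedges : Nat.card G.edgeSet = Nat.card V := by
    have hsum := sum_ncard_neighborSet G
    simp only [hdeg, Finset.sum_const, Finset.card_univ, smul_eq_mul,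
      ← Nat.card_eq_fintype_card] at hsum
    omega
  obtain ⟨n, hn⟩ := Nat.exists_eq_add_of_le' (hlen ▸ hthree)
  obtain ⟨φ⟩ := nonempty_iso_of_isContained hsub (by simp)
    (by rw [hedges, hn, card_edgeSet_cycleGraph])
  exact ⟨φ.symm⟩

lemma nonempty_iso_pathGraph_or_cycleGraph [Finite V] (hG : G.Connected)
    (hdeg : ∀ v, (G.neighborSet v).ncard ≤ 2) :
    Nonempty (G ≃g pathGraph (Nat.card V)) ∨ Nonempty (G ≃g cycleGraph (Nat.card V)) := by
  by_cases h : ∀ v, (G.neighborSet v).ncard = 2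
  · exact .inr (nonempty_iso_cycleGraph hG h)
  · obtain ⟨v, hv⟩ := not_forall.mp h
    exact .inl (nonempty_iso_pathGraph hG hdeg hv)

end PathOrCycle

section LineGraph

variable {G : SimpleGraph V}

/-- The edges incident to `v`, as a set of vertices of the line graph (`incidenceSet` is a set of
elements of `Sym2 V` instead). -/
def edgesAt (G : SimpleGraph V) (v : V) : Set G.edgeSet := {e | v ∈ (e : Sym2 V)}

@[simp]
lemma mem_edgesAt {v : V} {e : G.edgeSet} : e ∈ edgesAt G v ↔ v ∈ (e : Sym2 V) := Iff.rfl

lemma ncard_edgesAt (v : V) : (edgesAt G v).ncard = (G.neighborSet v).ncard := by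
  classical
  have hval : Subtype.val '' edgesAt G v = G.incidenceSet v := by
    ext e
    simp [incidenceSet, and_comm]
  rw [← Set.ncard_image_of_injective _ Subtype.val_injective, hval]
  exact Nat.card_congr (G.incidenceSetEquivNeighborSet v)

lemma isClique_edgesAt (v : V) : G.lineGraph.IsClique (edgesAt G v) :=
  fun _ he _ hf hne => lineGraph_adj_iff_exists.mpr ⟨hne, v, he, hf⟩

lemma preconnected_lineGraph (hG : G.Preconnected) : G.lineGraph.Preconnected := by
  have hmeet {v : V} {e f : G.edgeSet} (he : e ∈ edgesAt G v) (hf : f ∈ edgesAt G v) :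
      G.lineGraph.Reachable e f := by
    obtain rfl | hne := eq_or_ne e f
    · rfl
    · exact (isClique_edgesAt v he hf hne).reachable
  have hwalk {u v : V} (p : G.Walk u v) {f : G.edgeSet} (hf : f ∈ edgesAt G v) :
      ∀ e ∈ edgesAt G u, G.lineGraph.Reachable e f := by
    induction p with
    | nil => exact fun e he => hmeet he hf
    | @cons u v w huv _ ih =>
      intro e he
      have huv_at : (⟨s(u, v), huv⟩ : G.edgeSet) ∈ edgesAt G u := Sym2.mem_mk_left u v
      exact (hmeet he huv_at).trans (ih hf _ (Sym2.mem_mk_right u v))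
  intro e f
  obtain ⟨p⟩ := hG (e : Sym2 V).out.1 (f : Sym2 V).out.1
  exact hwalk p (Sym2.out_fst_mem _) e (Sym2.out_fst_mem _)

/-- The excess `e(G) - n(G)`, half the sum of `deg v - 2` over the vertices `v`. It is an integer
because it equals `-1` on trees. -/
noncomputable def excess (G : SimpleGraph V) : ℤ := Nat.card G.edgeSet - Nat.card V

lemma two_mul_card_edgeSet_lineGraph [Fintype V] (G : SimpleGraph V) :
    2 * (Nat.card G.lineGraph.edgeSet : ℤ)
      = ∑ v, ((G.neighborSet v).ncard : ℤ) * ((G.neighborSet v).ncard - 1) := by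
  classical
  have hpairs : (Finset.univ.filter fun (e, f) => G.lineGraph.Adj e f)
      = Finset.univ.biUnion fun v => (edgesAt G v).toFinset.offDiag := by
    ext ⟨e, f⟩
    simp only [Finset.mem_filter, Finset.mem_univ, true_and, lineGraph_adj_iff_exists,
      Finset.mem_biUnion, Finset.mem_offDiag, Set.mem_toFinset, mem_edgesAt]
    tauto
  have hdisj : Set.PairwiseDisjoint (Finset.univ : Finset V)
      fun v => (edgesAt G v).toFinset.offDiag := by
    intro u _ v _ huv
    refine Finset.disjoint_left.mpr fun ⟨e, f⟩ hu hv => ?_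
    simp only [Finset.mem_offDiag, Set.mem_toFinset, mem_edgesAt] at hu hv
    exact hu.2.2 (Subtype.ext (Sym2.eq_of_ne_mem huv hu.1 hv.1 hu.2.1 hv.2.1))
  have h := G.lineGraph.two_mul_card_edgeFinset
  rw [hpairs, Finset.card_biUnion hdisj, edgeFinset_card, ← Nat.card_eq_fintype_card] at h
  simp only [Finset.offDiag_card, ← Set.ncard_eq_toFinset_card', ncard_edgesAt] at h
  calc (2 * (Nat.card G.lineGraph.edgeSet : ℤ))
      = ∑ v, (((G.neighborSet v).ncard * (G.neighborSet v).ncard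
          - (G.neighborSet v).ncard : ℕ) : ℤ) := mod_cast h
    _ = ∑ v, ((G.neighborSet v).ncard : ℤ) * ((G.neighborSet v).ncard - 1) := by
      refine Finset.sum_congr rfl fun v _ => ?_
      rw [Nat.cast_sub (Nat.le_mul_self _), Nat.cast_mul, mul_sub_one]

lemma two_mul_excess_lineGraph_sub_excess [Fintype V] (G : SimpleGraph V) :
    2 * (excess G.lineGraph - excess G)
      = ∑ v, ((G.neighborSet v).ncard - 1 : ℤ) * ((G.neighborSet v).ncard - 2) := by
  have hE : (∑ v, (G.neighborSet v).ncard : ℤ) = 2 * Nat.card G.edgeSet :=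
    mod_cast sum_ncard_neighborSet G
  have hV : (∑ _v : V, 2 : ℤ) = 2 * Nat.card V := by simp [mul_comm]
  have hterm (d : ℤ) : (d - 1) * (d - 2) = d * (d - 1) - 2 * d + 2 := by ring
  simp only [hterm, Finset.sum_add_distrib, Finset.sum_sub_distrib, ← Finset.mul_sum, hE, hV,
    ← two_mul_card_edgeSet_lineGraph, excess]
  ring

lemma excess_lt_excess_lineGraph [Finite V] (hG : ∃ v, 3 ≤ (G.neighborSet v).ncard) :
    excess G < excess G.lineGraph := by
  have := Fintype.ofFinite V
  obtain ⟨v, hv⟩ := hG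
  have hpos : 0 < ∑ v, ((G.neighborSet v).ncard - 1 : ℤ) * ((G.neighborSet v).ncard - 2) := by
    refine Finset.sum_pos' (fun u _ => ?_) ⟨v, Finset.mem_univ v, ?_⟩
    · obtain hle | hge : (G.neighborSet u).ncard ≤ 1 ∨ 2 ≤ (G.neighborSet u).ncard := by omega
      · exact mul_nonneg_of_nonpos_of_nonpos (by omega) (by omega)
      · exact mul_nonneg (by omega) (by omega)
    · exact mul_pos (by omega) (by omega)
  linarith [two_mul_excess_lineGraph_sub_excess G]

end LineGraph

section Branching

variable {G : SimpleGraph V}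

lemma eq_univ_of_isClique_of_ncard_neighborSet_lt [Finite V] (hG : G.Preconnected) {s : Set V}
    (hs : G.IsClique s) (hne : s.Nonempty) (hdeg : ∀ v ∈ s, (G.neighborSet v).ncard < s.ncard) :
    s = Set.univ := by
  by_contra h
  obtain ⟨u, hu⟩ := hne
  obtain ⟨w, hw⟩ := (Set.ne_univ_iff_exists_notMem s).mp h
  obtain ⟨p⟩ := hG u w
  obtain ⟨⟨⟨x, y⟩, hxy⟩, -, hx, hy⟩ := p.exists_boundary_dart s hu hw
  have hsub : s \ {x} ⊆ G.neighborSet x := fun z hz => hs hx hz.1 (Ne.symm hz.2)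
  have hcard : (G.neighborSet x).ncard ≤ (s \ {x}).ncard := by
    have := hdeg x hx
    rw [Set.ncard_sdiff_singleton_of_mem hx]
    omega
  have heq := Set.eq_of_subset_of_ncard_le hsub hcard
  exact hy (heq.ge hxy).1

lemma card_edgeSet_claw : Nat.card (completeBipartiteGraph (Fin 1) (Fin 3)).edgeSet = 3 := by
  rw [Nat.card_coe_set_eq, Set.ncard, encard_edgeSet_completeBipartiteGraph]
  simp

lemma claw_isContained {v : V} (hv : 3 ≤ (G.neighborSet v).ncard) :
    completeBipartiteGraph (Fin 1) (Fin 3) ⊑ G := by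
  have hfin : (G.neighborSet v).Finite := Set.finite_of_ncard_pos (by omega)
  obtain ⟨t, ht, htcard⟩ := Set.exists_subset_card_eq hv
  lift t to Finset V using hfin.subset ht
  refine completeBipartiteGraph_isContained_iff.mpr ⟨{v}, t, by simp, by simpa using htcard, ?_⟩
  intro a ha b hb
  obtain rfl : a = v := by simpa using ha
  exact ht hb

lemma not_lineGraph_isContained_claw {v : V} (hv : 3 ≤ (G.neighborSet v).ncard) :
    ¬ G.lineGraph ⊑ completeBipartiteGraph (Fin 1) (Fin 3) := by
  rw [← ncard_edgesAt] at hv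
  have hfin : (edgesAt G v).Finite := Set.finite_of_ncard_pos (by omega)
  obtain ⟨t, ht, htcard⟩ := Set.exists_subset_card_eq hv
  lift t to Finset G.edgeSet using hfin.subset ht
  rw [Set.ncard_coe_finset] at htcard
  have htriangle : G.lineGraph.IsNClique 3 t := ⟨(isClique_edgesAt v).subset ht, htcard⟩
  have hfree : (completeBipartiteGraph (Fin 1) (Fin 3)).CliqueFree 3 :=
    (CompleteBipartiteGraph.bicoloring _ _).colorable.cliqueFree (by simp)
  exact fun h => hfree.comap h t htriangle

/-- The class of graphs on which the excess increases strictly under iteration of the line graph: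
connected, with a vertex of degree at least three, other than the claw `K_{1,3}`. -/
structure IsBranching (G : SimpleGraph V) : Prop where
  connected : G.Connected
  exists_three_le : ∃ v, 3 ≤ (G.neighborSet v).ncard
  not_claw : IsEmpty (G ≃g completeBipartiteGraph (Fin 1) (Fin 3))

lemma IsBranching.exists_three_le_lineGraph [Finite V] (hG : IsBranching G) :
    ∃ e, 3 ≤ (G.lineGraph.neighborSet e).ncard := by
  by_contra! hdeg
  obtain ⟨v, hv⟩ := hG.exists_three_le
  have hv' : 3 ≤ (edgesAt G v).ncard := hv.trans_eq (ncard_edgesAt v).symm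
  have huniv : edgesAt G v = Set.univ :=
    eq_univ_of_isClique_of_ncard_neighborSet_lt (preconnected_lineGraph hG.connected.preconnected)
      (isClique_edgesAt v) (Set.nonempty_of_ncard_ne_zero (by omega))
      fun e _ => (hdeg e).trans_le hv'
  obtain ⟨e, he⟩ : (edgesAt G v).Nonempty := Set.nonempty_of_ncard_ne_zero (by omega)
  have hE : Nat.card G.edgeSet ≤ 3 := by
    rw [← Set.ncard_univ, ← huniv]
    have hsub : edgesAt G v \ {e} ⊆ G.lineGraph.neighborSet e :=
      fun f hf => isClique_edgesAt v he hf.1 (Ne.symm hf.2)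
    have hle := Set.ncard_le_ncard hsub
    have := hdeg e
    rw [Set.ncard_sdiff_singleton_of_mem he] at hle
    omega
  have hV := hG.connected.card_vert_le_card_edgeSet_add_one
  obtain ⟨φ⟩ := nonempty_iso_of_isContained (claw_isContained hv)
    (by simpa using hV.trans (Nat.add_le_add_right hE 1)) (hE.trans_eq card_edgeSet_claw.symm)
  exact hG.not_claw.false φ.symm

lemma IsBranching.lineGraph [Finite V] (hG : IsBranching G) : IsBranching G.lineGraph where
  connected := by
    obtain ⟨e, -⟩ := hG.exists_three_le_lineGraph
    have : Nonempty G.edgeSet := ⟨e⟩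
    exact ⟨preconnected_lineGraph hG.connected.preconnected⟩
  exists_three_le := hG.exists_three_le_lineGraph
  not_claw := by
    obtain ⟨v, hv⟩ := hG.exists_three_le
    exact ⟨fun φ => not_lineGraph_isContained_claw hv φ.isContained⟩

end Branching

lemma exists_isMatching_of_isClique_preimage {ι : Type*} [Finite W] {G : SimpleGraph W}
    (f : W → ι) (r : ι) (hclique : ∀ i, G.IsClique (f ⁻¹' {i}))
    (heven : ∀ i ≠ r, Even (f ⁻¹' {i}).ncard) :
    ∃ M : G.Subgraph, M.IsMatching ∧ M.vertsᶜ.Subsingleton := by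
  obtain ⟨t, htr, ht, hteven⟩ :
      ∃ t ⊆ f ⁻¹' {r}, t.Subsingleton ∧ Even (f ⁻¹' {r} \ t).ncard := by
    by_cases hr : Even (f ⁻¹' {r}).ncard
    · exact ⟨∅, Set.empty_subset _, Set.subsingleton_empty, by simpa using hr⟩
    · rw [Nat.not_even_iff_odd] at hr
      obtain ⟨x, hx⟩ := Set.nonempty_of_ncard_ne_zero hr.pos.ne'
      refine ⟨{x}, Set.singleton_subset_iff.mpr hx, Set.subsingleton_singleton, ?_⟩
      rw [Set.ncard_sdiff_singleton_of_mem hx]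
      exact hr.tsub_odd odd_one
  have hmatch (i : ι) : ∃ M : G.Subgraph, M.verts = f ⁻¹' {i} \ t ∧ M.IsMatching := by
    rw [← ((hclique i).subset Set.sdiff_subset).even_iff_exists_isMatching (Set.toFinite _)]
    obtain rfl | hi := eq_or_ne i r
    · exact hteven
    · have hit : Disjoint (f ⁻¹' {i}) t :=
        ((Set.disjoint_singleton.mpr hi).preimage f).mono_right htr
      rw [hit.sdiff_eq_left]
      exact heven i hi
  choose M hverts hM using hmatch
  have hdisj : Pairwise fun i j => Disjoint (M i).support (M j).support := by
    intro i j hij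
    rw [(hM i).support_eq_verts, (hM j).support_eq_verts, hverts, hverts]
    exact ((Set.disjoint_singleton.mpr hij).preimage f).mono Set.sdiff_subset Set.sdiff_subset
  refine ⟨⨆ i, M i, Subgraph.IsMatching.iSup hM hdisj, ht.anti fun x hx => ?_⟩
  by_contra hxt
  refine hx ?_
  rw [Subgraph.verts_iSup, Set.mem_iUnion]
  exact ⟨f x, (hverts _).ge ⟨rfl, hxt⟩⟩

section Orientation

variable {G : SimpleGraph V}

/-- An orientation of `G`, encoded as the choice of a head for every edge. -/
abbrev Orientation (G : SimpleGraph V) : Type _ := ∀ e : G.edgeSet, {v : V // v ∈ (e : Sym2 V)}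

namespace Orientation

variable [Fintype G.edgeSet] [DecidableEq V]

/-- The in-degrees modulo 2 of an orientation. -/
def parity (a : Orientation G) : V → ZMod 2 := ∑ e, Pi.single (a e : V) 1

lemma parity_apply (a : Orientation G) (v : V) :
    a.parity v = (((fun e => (a e : V)) ⁻¹' {v}).ncard : ZMod 2) := by
  have hfilter : (Finset.univ.filter fun e => v = (a e : V)) = ((fun e => (a e : V)) ⁻¹' {v}) := by
    ext e
    simp [eq_comm]
  rw [← hfilter, Set.ncard_coe_finset]
  simp only [parity, Finset.sum_apply, Pi.single_apply, Finset.sum_boole]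

lemma parity_update (a : Orientation G) (e : G.edgeSet) (w : {v : V // v ∈ (e : Sym2 V)}) :
    parity (Function.update a e w) = a.parity + Pi.single (a e : V) 1 + Pi.single (w : V) 1 := by
  have hrest : ∑ f ∈ Finset.univ.erase e, (Pi.single (Function.update a e w f : V) 1 : V → ZMod 2)
      = ∑ f ∈ Finset.univ.erase e, Pi.single (a f : V) 1 :=
    Finset.sum_congr rfl fun f hf => by rw [Function.update_of_ne (Finset.ne_of_mem_erase hf)]
  have hsplit (b : Orientation G) :
      b.parity = Pi.single (b e : V) 1 + ∑ f ∈ Finset.univ.erase e, Pi.single (b f : V) 1 :=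
    (Finset.add_sum_erase _ _ (Finset.mem_univ e)).symm
  calc parity (Function.update a e w)
      = Pi.single (w : V) 1 + ∑ f ∈ Finset.univ.erase e, Pi.single (a f : V) 1 := by
        rw [hsplit, Function.update_self, hrest]
    _ = a.parity + Pi.single (w : V) 1 - Pi.single (a e : V) 1 := by rw [hsplit a]; abel
    _ = a.parity + Pi.single (a e : V) 1 + Pi.single (w : V) 1 := by
        rw [ZModModule.sub_eq_add, add_right_comm]

lemma exists_parity_eq_add_of_adj (a : Orientation G) {u v : V} (huv : G.Adj u v) :
    ∃ b : Orientation G, b.parity = a.parity + Pi.single u 1 + Pi.single v 1 := by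
  obtain h | h := Sym2.mem_iff.mp (a ⟨s(u, v), huv⟩).2
  · refine ⟨Function.update a ⟨s(u, v), huv⟩ ⟨v, Sym2.mem_mk_right u v⟩, ?_⟩
    rw [parity_update, h]
  · refine ⟨Function.update a ⟨s(u, v), huv⟩ ⟨u, Sym2.mem_mk_left u v⟩, ?_⟩
    rw [parity_update, h, add_right_comm]

lemma exists_parity_eq_add_of_reachable (a : Orientation G) {u v : V} (huv : G.Reachable u v) :
    ∃ b : Orientation G, b.parity = a.parity + Pi.single u 1 + Pi.single v 1 := by
  obtain ⟨p⟩ := huv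
  induction p with
  | nil => exact ⟨a, by rw [add_assoc, ZModModule.add_self, add_zero]⟩
  | @cons u x v hux _ ih =>
    obtain ⟨b, hb⟩ := ih
    obtain ⟨c, hc⟩ := b.exists_parity_eq_add_of_adj hux
    refine ⟨c, ?_⟩
    calc c.parity
        = a.parity + Pi.single u 1 + Pi.single v 1 + (Pi.single x 1 + Pi.single x 1) := by
          rw [hc, hb]; abel
      _ = a.parity + Pi.single u 1 + Pi.single v 1 := by rw [ZModModule.add_self, add_zero]

lemma exists_parity_eq_zero [Finite V] (hG : G.Preconnected) (r : V) :
    ∃ a : Orientation G, ∀ v ≠ r, a.parity v = 0 := by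
  have := Fintype.ofFinite V
  suffices h : ∀ s : Finset V, ∃ a : Orientation G, ∀ v ∈ s, v ≠ r → a.parity v = 0 by
    simpa using h Finset.univ
  intro s
  induction s using Finset.induction_on with
  | empty => exact ⟨fun e => ⟨(e : Sym2 V).out.1, Sym2.out_fst_mem _⟩, by simp⟩
  | insert v s hvs ih =>
    obtain ⟨a, ha⟩ := ih
    by_cases hv : v ≠ r → a.parity v = 0
    · exact ⟨a, Finset.forall_mem_insert .. |>.mpr ⟨hv, ha⟩⟩
    push Not at hv
    obtain ⟨b, hb⟩ := a.exists_parity_eq_add_of_reachable (hG v r)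
    refine ⟨b, Finset.forall_mem_insert .. |>.mpr ⟨fun hvr => ?_, fun w hw hwr => ?_⟩⟩
    · have hone : a.parity v = 1 := Fin.eq_one_of_ne_zero _ hv.2
      simp [hb, hone, hvr, CharTwo.add_self_eq_zero]
    · have hwv : w ≠ v := ne_of_mem_of_not_mem hw hvs
      simp [hb, ha w hw hwr, hwv, hwr]

end Orientation

lemma exists_isMatching_lineGraph [Finite V] (hG : G.Connected) :
    ∃ M : G.lineGraph.Subgraph, M.IsMatching ∧ M.vertsᶜ.Subsingleton := by
  classical
  have := Fintype.ofFinite V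
  obtain ⟨r⟩ := hG.nonempty
  obtain ⟨a, ha⟩ := Orientation.exists_parity_eq_zero hG.preconnected r
  refine exists_isMatching_of_isClique_preimage (fun e => (a e : V)) r (fun v => ?_) fun v hv => ?_
  · exact (isClique_edgesAt v).subset fun e he => he ▸ (a e).2
  · rw [← ZMod.natCast_eq_zero_iff_even, ← a.parity_apply, ha v hv]

end Orientation

lemma ncard_biUnion_coe_of_pairwise_disjoint {s : Set (Sym2 V)} (hs : s.Finite)
    (hdiag : ∀ e ∈ s, ¬ e.IsDiag) (hdisj : s.Pairwise fun e f => ∀ v, ¬(v ∈ e ∧ v ∈ f)) :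
    (⋃ e ∈ s, (e : Set V)).ncard = 2 * s.ncard := by
  classical
  lift s to Finset (Sym2 V) using hs
  have hdisj' : (s : Set (Sym2 V)).PairwiseDisjoint Sym2.toFinset := by
    intro e he f hf hef
    refine Finset.disjoint_left.mpr fun v hve hvf => hdisj he hf hef v ?_
    exact ⟨Sym2.mem_toFinset.mp hve, Sym2.mem_toFinset.mp hvf⟩
  have hcoe : (⋃ e ∈ (s : Set (Sym2 V)), (e : Set V)) = s.biUnion Sym2.toFinset := by
    ext v
    simp
  rw [hcoe, Set.ncard_coe_finset, Set.ncard_coe_finset, Finset.card_biUnion hdisj',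
    Finset.sum_congr rfl fun e he => e.card_toFinset_of_not_isDiag (hdiag e he),
    Finset.sum_const, smul_eq_mul, mul_comm]

end IteratedLineGraph

namespace FGraph

open IteratedLineGraph

variable {X : FGraph}

section MatchNum

variable [Finite X.V]

lemma two_mul_ncard_le_of_pairwise_disjoint {s : Set (Sym2 X.V)} (hs : s ⊆ X.G.edgeSet)
    (hdisj : s.Pairwise fun e f => ∀ v, ¬(v ∈ e ∧ v ∈ f)) : 2 * s.ncard ≤ X.n := by
  rw [← ncard_biUnion_coe_of_pairwise_disjoint s.toFinite
    (fun e he => X.G.not_isDiag_of_mem_edgeSet (hs he)) hdisj]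
  exact Set.ncard_le_card _

lemma two_mul_matchNum_le_n (X : FGraph) [Finite X.V] : 2 * X.matchNum ≤ X.n := by
  have hle : X.matchNum ≤ X.n / 2 := by
    refine csSup_le ⟨0, ∅, by simp⟩ ?_
    rintro k ⟨s, hs, hdisj, rfl⟩
    have := two_mul_ncard_le_of_pairwise_disjoint hs hdisj
    omega
  omega

lemma ncard_verts_le_two_mul_matchNum {M : X.G.Subgraph} (hM : M.IsMatching) :
    M.verts.ncard ≤ 2 * X.matchNum := by
  have hdisj : M.edgeSet.Pairwise fun e f => ∀ v, ¬(v ∈ e ∧ v ∈ f) := by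
    rintro e he f hf hne v ⟨hve, hvf⟩
    obtain ⟨x, rfl⟩ := Sym2.mem_iff_exists.mp hve
    obtain ⟨y, rfl⟩ := Sym2.mem_iff_exists.mp hvf
    exact hne (congrArg (s(v, ·)) (hM.eq_of_adj_left he hf))
  rw [hM.verts_eq_biUnion_edgeSet, ncard_biUnion_coe_of_pairwise_disjoint M.edgeSet.toFinite
    (fun e he => X.G.not_isDiag_of_mem_edgeSet (M.edgeSet_subset he)) hdisj]
  refine Nat.mul_le_mul_left 2 (le_csSup ⟨X.n, ?_⟩ ⟨_, M.edgeSet_subset, hdisj, rfl⟩)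
  rintro k ⟨s, hs, hdisj, rfl⟩
  have := two_mul_ncard_le_of_pairwise_disjoint hs hdisj
  omega

instance finite_line : Finite X.line.V := inferInstanceAs (Finite X.G.edgeSet)

lemma e_le_two_mul_matchNum_line_add_one (hX : X.G.Connected) :
    X.e ≤ 2 * X.line.matchNum + 1 := by
  obtain ⟨M, hM, hcompl⟩ : ∃ M : X.line.G.Subgraph, M.IsMatching ∧ M.vertsᶜ.Subsingleton :=
    exists_isMatching_lineGraph hX
  have hverts := ncard_verts_le_two_mul_matchNum hM
  have hmissed : M.vertsᶜ.ncard ≤ 1 := Set.ncard_le_one_iff_subsingleton.mpr hcompl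
  have hsum : M.verts.ncard + M.vertsᶜ.ncard = X.e := Set.ncard_add_ncard_compl M.verts
  omega

end MatchNum

lemma Prolific.isBranching [Finite X.V] (hX : X.Prolific) : IsBranching X.G := by
  obtain ⟨hconn, hpath, hcycle, hclaw⟩ := hX
  refine ⟨hconn, ?_, hclaw⟩
  by_contra! hdeg
  obtain ⟨⟨φ⟩⟩ | ⟨⟨φ⟩⟩ :=
    nonempty_iso_pathGraph_or_cycleGraph hconn fun v => Nat.le_of_lt_succ (hdeg v)
  · exact (hpath _).false φ
  · exact (hcycle _).false φ

section Iterate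

lemma iter_succ (X : FGraph) (k : ℕ) : X.iter (k + 1) = (X.iter k).line :=
  Function.iterate_succ_apply' _ _ _

lemma n_iter_succ (X : FGraph) (k : ℕ) : (X.iter (k + 1)).n = (X.iter k).e := by
  rw [iter_succ]
  rfl

variable [Finite X.V]

instance finite_iter (k : ℕ) : Finite (X.iter k).V := by
  induction k with
  | zero => assumption
  | succ k ih => rw [iter_succ]; infer_instance

lemma isBranching_iter (hX : IsBranching X.G) (k : ℕ) : IsBranching (X.iter k).G := by
  induction k with
  | zero => exact hX
  | succ k ih => rw [iter_succ]; exact ih.lineGraph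

lemma sub_one_le_excess_iter (hX : IsBranching X.G) (k : ℕ) :
    (k : ℤ) - 1 ≤ excess (X.iter k).G := by
  induction k with
  | zero =>
    have hE := hX.connected.card_vert_le_card_edgeSet_add_one
    simp only [iter, Function.iterate_zero, id, excess]
    omega
  | succ k ih =>
    rw [iter_succ]
    have := excess_lt_excess_lineGraph (isBranching_iter hX k).exists_three_le
    simp only [line]
    omega

lemma two_mul_n_add_le_two_mul_n_iter (hX : IsBranching X.G) (k : ℕ) :
    2 * (X.n : ℤ) + k * (k - 3) ≤ 2 * (X.iter k).n := by
  induction k with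
  | zero => simp [iter]
  | succ k ih =>
    have hexcess : (k : ℤ) - 1 ≤ (X.iter k).e - (X.iter k).n := sub_one_le_excess_iter hX k
    rw [n_iter_succ]
    push_cast
    linarith

end Iterate

end FGraph

/-- For a prolific graph there is `r` with `1 ≤ r ≤ 4` and `μ(L^r(G)) > μ(G)`. -/
theorem matchingNumber_index_le_four (X : FGraph) [Finite X.V] (hp : X.Prolific) :
    ∃ r : ℕ, 1 ≤ r ∧ r ≤ 4 ∧ X.matchNum < (X.iter r).matchNum := by
  have hX := hp.isBranching
  have hupper := X.two_mul_matchNum_le_n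
  have hgrowth := FGraph.two_mul_n_add_le_two_mul_n_iter hX 4
  have hlower : (X.iter 4).n ≤ 2 * (X.iter 4).matchNum + 1 := by
    rw [FGraph.n_iter_succ, FGraph.iter_succ]
    exact FGraph.e_le_two_mul_matchNum_line_add_one (FGraph.isBranching_iter hX 3).connected
  exact ⟨4, by norm_num, le_rfl, by omega⟩
end

section
/- Let G be a prolific graph. Then there exists r with 1 ≤ r ≤ 3 such that χ(L^r(G)) > χ(G), where χ denotes the chromatic number. -/
open SimpleGraph

/-!
A vertex of degree `d` yields a `d`-clique in the line graph, and an edge `uv` has degree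
`deg u + deg v - 2` there. Hence `χ(L(G)) ≥ deg v`, and applying the degree formula twice,
`χ(L³(G)) ≥ 2 deg v + deg u + deg w - 6` whenever `u ≠ w` are neighbours of `v`.

A connected finite graph other than a path or a cycle has a vertex of degree at least `3`, so
`r = 1` works if `χ(G) ≤ 2`. If `χ(G) = n + 1 ≥ 3`, greedy colouring together with the
de Bruijn–Erdős theorem provides a finite nonempty set `S` of vertices, each having at least `n`
neighbours in `S`. As `n ≥ 2`, connectedness gives a vertex `v ∈ S` of degree at least `max 3 n`,
which has two neighbours `u, w ∈ S`, and then
`χ(L³(G)) ≥ 2 max 3 n + n + n - 6 ≥ n + 2 > χ(G)`.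
-/

section LineGraph

variable {V : Type*} {G : SimpleGraph V} {u v w : V}

theorem lineGraph_adj_of_adj_of_adj (hu : G.Adj v u) (hw : G.Adj v w) (huw : u ≠ w) :
    G.lineGraph.Adj ⟨s(v, u), hu⟩ ⟨s(v, w), hw⟩ :=
  lineGraph_adj_iff_exists.2
    ⟨fun h => huw (Sym2.congr_right.1 (congrArg Subtype.val h)), v, by simp, by simp⟩

theorem encard_neighborSet_le_chromaticNumber_lineGraph (G : SimpleGraph V) (v : V) :
    (G.neighborSet v).encard ≤ G.lineGraph.chromaticNumber := by
  let star : (⊤ : SimpleGraph (G.neighborSet v)) →g G.lineGraph :=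
    { toFun := fun u => ⟨s(v, u), u.2⟩
      map_rel' := fun {u w} huw =>
        lineGraph_adj_of_adj_of_adj u.2 w.2 (Subtype.coe_injective.ne huw) }
  calc (G.neighborSet v).encard
      = (⊤ : SimpleGraph (G.neighborSet v)).chromaticNumber := chromaticNumber_top_eq_enat_card.symm
    _ ≤ G.lineGraph.chromaticNumber := chromaticNumber_mono_of_hom star

theorem encard_incidenceSet (G : SimpleGraph V) (v : V) :
    (G.incidenceSet v).encard = (G.neighborSet v).encard := by
  classical
  exact ENat.card_congr (G.incidenceSetEquivNeighborSet v)

theorem image_val_neighborSet_lineGraph (h : G.Adj u v) :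
    Subtype.val '' G.lineGraph.neighborSet ⟨s(u, v), h⟩ =
      (G.incidenceSet u ∪ G.incidenceSet v) \ {s(u, v)} := by
  ext e
  constructor
  · rintro ⟨⟨e, he⟩, hadj, rfl⟩
    obtain ⟨hne, x, hx, hxe⟩ := lineGraph_adj_iff_exists.1 hadj
    refine ⟨?_, fun heq => hne (Subtype.ext heq.symm)⟩
    obtain rfl | rfl := Sym2.mem_iff.1 hx
    · exact Or.inl ⟨he, hxe⟩
    · exact Or.inr ⟨he, hxe⟩
  · rintro ⟨hinc, hne⟩
    have he : e ∈ G.edgeSet := hinc.elim And.left And.left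
    refine ⟨⟨e, he⟩, lineGraph_adj_iff_exists.2
      ⟨fun heq => hne (congrArg Subtype.val heq).symm, ?_⟩, rfl⟩
    exact hinc.elim (fun hu => ⟨u, Sym2.mem_mk_left u v, hu.2⟩)
      fun hv => ⟨v, Sym2.mem_mk_right u v, hv.2⟩

theorem encard_neighborSet_lineGraph_add_two (h : G.Adj u v) :
    (G.lineGraph.neighborSet ⟨s(u, v), h⟩).encard + 2 =
      (G.neighborSet u).encard + (G.neighborSet v).encard := by
  have hmem : s(u, v) ∈ G.incidenceSet u ∪ G.incidenceSet v :=
    Or.inl (G.mk'_mem_incidenceSet_left_iff.2 h)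
  calc (G.lineGraph.neighborSet ⟨s(u, v), h⟩).encard + 2
      = ((G.incidenceSet u ∪ G.incidenceSet v) \ {s(u, v)}).encard + 1 + 1 := by
        rw [← image_val_neighborSet_lineGraph h, Subtype.val_injective.encard_image, add_assoc,
          one_add_one_eq_two]
    _ = (G.incidenceSet u ∪ G.incidenceSet v).encard +
          (G.incidenceSet u ∩ G.incidenceSet v).encard := by
        rw [Set.encard_sdiff_singleton_add_one hmem, G.incidenceSet_inter_incidenceSet_of_adj h,
          Set.encard_singleton]
    _ = (G.neighborSet u).encard + (G.neighborSet v).encard := by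
        rw [Set.encard_union_add_encard_inter, encard_incidenceSet, encard_incidenceSet]

theorem encard_neighborSet_add_le_chromaticNumber_lineGraph_lineGraph (h : G.Adj u v) :
    (G.neighborSet u).encard + (G.neighborSet v).encard ≤
      G.lineGraph.lineGraph.chromaticNumber + 2 := by
  rw [← encard_neighborSet_lineGraph_add_two h]
  gcongr
  exact encard_neighborSet_le_chromaticNumber_lineGraph G.lineGraph _

theorem encard_neighborSet_add_le_chromaticNumber_lineGraph_lineGraph_lineGraph
    (hu : G.Adj v u) (hw : G.Adj v w) (huw : u ≠ w) :
    2 * (G.neighborSet v).encard + (G.neighborSet u).encard + (G.neighborSet w).encard ≤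
      G.lineGraph.lineGraph.lineGraph.chromaticNumber + 6 := by
  calc 2 * (G.neighborSet v).encard + (G.neighborSet u).encard + (G.neighborSet w).encard
      = ((G.neighborSet v).encard + (G.neighborSet u).encard) +
          ((G.neighborSet v).encard + (G.neighborSet w).encard) := by ring
    _ = (G.lineGraph.neighborSet ⟨s(v, u), hu⟩).encard +
          (G.lineGraph.neighborSet ⟨s(v, w), hw⟩).encard + 4 := by
        rw [← encard_neighborSet_lineGraph_add_two hu, ← encard_neighborSet_lineGraph_add_two hw]
        ring
    _ ≤ G.lineGraph.lineGraph.lineGraph.chromaticNumber + 2 + 4 := by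
        gcongr ?_ + 4
        exact encard_neighborSet_add_le_chromaticNumber_lineGraph_lineGraph
          (lineGraph_adj_of_adj_of_adj hu hw huw)
    _ = G.lineGraph.lineGraph.lineGraph.chromaticNumber + 6 := by ring

end LineGraph

section Coloring

variable {V : Type*} {G : SimpleGraph V} {n : ℕ}

theorem colorable_of_forall_finset_colorable_induce
    (h : ∀ S : Finset V, (G.induce (S : Set V)).Colorable n) : G.Colorable n := by
  refine nonempty_hom_of_forall_finite_subgraph_hom fun H hH => ?_
  let C : (G.induce H.verts).Coloring (Fin n) :=
    (hH.coe_toFinset ▸ h hH.toFinset : (G.induce H.verts).Colorable n).some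
  exact Hom.comp C ⟨id, H.adj_sub⟩

theorem colorable_induce_insert {S : Set V} {v : V} (hS : (G.induce S).Colorable n)
    (hv : (G.neighborSet v ∩ S).encard < n) : (G.induce (insert v S)).Colorable n := by
  classical
  obtain ⟨C⟩ := hS
  obtain ⟨x, hx⟩ : ∃ x : Fin n, ∀ w (hw : w ∈ S), G.Adj v w → C ⟨w, hw⟩ ≠ x := by
    by_contra! hall
    choose f hfS hfadj hfC using hall
    have hf : Function.Injective f := fun x y hxy => by
      rw [← hfC x, ← hfC y]; simp only [hxy]
    have hsub : Set.range f ⊆ G.neighborSet v ∩ S :=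
      Set.range_subset_iff.2 fun x => ⟨hfadj x, hfS x⟩
    have hcard : (Set.range f).encard = n := by
      rw [← Set.image_univ, hf.encard_image, Set.encard_univ, ENat.card_eq_coe_fintype_card,
        Fintype.card_fin]
    exact hv.not_ge (hcard ▸ Set.encard_le_encard hsub)
  refine ⟨Coloring.mk (fun w => if hw : w.1 ∈ S then C ⟨w, hw⟩ else x) ?_⟩
  rintro ⟨a, ha⟩ ⟨b, hb⟩ (hab : G.Adj a b)
  by_cases haS : a ∈ S <;> by_cases hbS : b ∈ S <;> simp only [haS, hbS, dite_true, dite_false]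
  · exact C.valid hab
  · obtain rfl := hb.resolve_right hbS
    exact hx a haS hab.symm
  · obtain rfl := ha.resolve_right haS
    exact (hx b hbS hab).symm
  · exact (hab.ne ((ha.resolve_right haS).trans (hb.resolve_right hbS).symm)).elim

theorem exists_finset_forall_le_encard_neighborSet_inter (h : n < G.chromaticNumber) :
    ∃ S : Finset V, S.Nonempty ∧ ∀ v ∈ S, n ≤ (G.neighborSet v ∩ S).encard := by
  classical
  by_contra! hsparse
  refine h.not_ge (Colorable.chromaticNumber_le
    (colorable_of_forall_finset_colorable_induce fun S => ?_))
  induction S using Finset.strongInduction with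
  | H S ih =>
    obtain rfl | hS := S.eq_empty_or_nonempty
    · rw [Finset.coe_empty]
      exact Colorable.of_isEmpty n
    obtain ⟨v, hvS, hv⟩ := hsparse S hS
    have hv' : (G.neighborSet v ∩ (S.erase v : Finset V)).encard < n :=
      hv.trans_le' (Set.encard_le_encard (by gcongr; exact S.erase_subset v))
    have hins : insert v ((S.erase v : Finset V) : Set V) = S := by
      rw [← Finset.coe_insert, Finset.insert_erase hvS]
    exact hins ▸ colorable_induce_insert (ih _ (Finset.erase_ssubset hvS)) hv'

end Coloring

section Connected

variable {V : Type*} {G : SimpleGraph V}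

theorem exists_adj_mem_notMem (hG : G.Connected) {S : Set V} (hS : S.Nonempty) {x : V}
    (hx : x ∉ S) : ∃ a b, G.Adj a b ∧ a ∈ S ∧ b ∉ S := by
  obtain ⟨s, hs⟩ := hS
  obtain ⟨p⟩ := hG.preconnected s x
  obtain ⟨d, -, hfst, hsnd⟩ := p.exists_boundary_dart S hs hx
  exact ⟨d.fst, d.snd, d.adj, hfst, hsnd⟩

theorem exists_mem_lt_encard_neighborSet (hG : G.Connected) {S : Set V} (hS : S.Nonempty) {n : ℕ}
    (hn : ∀ v ∈ S, n ≤ (G.neighborSet v ∩ S).encard) {x : V} (hx : n < (G.neighborSet x).encard) :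
    ∃ v ∈ S, n < (G.neighborSet v).encard := by
  by_cases hxS : x ∈ S
  · exact ⟨x, hxS, hx⟩
  obtain ⟨a, b, hab, ha, hb⟩ := exists_adj_mem_notMem hG hS hxS
  refine ⟨a, ha, (ENat.add_one_le_iff (ENat.natCast_ne_top n)).1 ?_⟩
  calc (n + 1 : ℕ∞)
      ≤ (G.neighborSet a ∩ S).encard + 1 := by gcongr; exact hn a ha
    _ = (insert b (G.neighborSet a ∩ S)).encard :=
        (Set.encard_insert_of_notMem fun h => hb h.2).symm
    _ ≤ (G.neighborSet a).encard :=
        Set.encard_le_encard (Set.insert_subset hab Set.inter_subset_left)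

theorem exists_adj_adj_of_lt_chromaticNumber (hG : G.Connected) {x : V}
    (hx : 3 ≤ (G.neighborSet x).encard) {n : ℕ} (hn : 2 ≤ n) (h : n < G.chromaticNumber) :
    ∃ v u w, G.Adj v u ∧ G.Adj v w ∧ u ≠ w ∧ max 3 n ≤ (G.neighborSet v).encard ∧
      n ≤ (G.neighborSet u).encard ∧ n ≤ (G.neighborSet w).encard := by
  obtain ⟨S, hS, hcore⟩ := exists_finset_forall_le_encard_neighborSet_inter h
  have hdeg (v) (hv : v ∈ S) : n ≤ (G.neighborSet v).encard :=
    (hcore v hv).trans (Set.encard_le_encard Set.inter_subset_left)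
  have htwo (v) (hv : v ∈ S) : 2 ≤ (G.neighborSet v ∩ S).encard :=
    (hcore v hv).trans' (mod_cast hn)
  obtain ⟨v, hvS, hv⟩ := exists_mem_lt_encard_neighborSet hG (S := S) hS (n := 2) htwo
    (hx.trans_lt' (by norm_num))
  obtain ⟨u, w, ⟨hvu, huS⟩, ⟨hvw, hwS⟩, huw⟩ := Set.one_lt_encard_iff.1
    ((htwo v hvS).trans_lt' (by norm_num))
  exact ⟨v, u, w, hvu, hvw, huw, max_le (Order.succ_le_of_lt hv) (hdeg v hvS), hdeg u huS,
    hdeg w hwS⟩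

theorem add_two_le_chromaticNumber_lineGraph_lineGraph_lineGraph (hG : G.Connected) {x : V}
    (hx : 3 ≤ (G.neighborSet x).encard) {n : ℕ} (hn : 2 ≤ n) (h : n < G.chromaticNumber) :
    n + 2 ≤ G.lineGraph.lineGraph.lineGraph.chromaticNumber := by
  obtain ⟨v, u, w, hvu, hvw, huw, hv, hu, hw⟩ := exists_adj_adj_of_lt_chromaticNumber hG hx hn h
  have hsix : (n + 2 : ℕ∞) + 6 ≤ G.lineGraph.lineGraph.lineGraph.chromaticNumber + 6 :=
    calc (n + 2 : ℕ∞) + 6 ≤ 2 * max 3 n + n + n := by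
          norm_cast
          omega
      _ ≤ 2 * (G.neighborSet v).encard + (G.neighborSet u).encard + (G.neighborSet w).encard := by
          gcongr
      _ ≤ G.lineGraph.lineGraph.lineGraph.chromaticNumber + 6 :=
          encard_neighborSet_add_le_chromaticNumber_lineGraph_lineGraph_lineGraph hvu hvw huw
  exact (ENat.add_le_add_iff_right (ENat.ofNat_ne_top 6)).1 hsix

end Connected

section MaxDegreeTwo

variable {V : Type*} {G : SimpleGraph V}

theorem cycleGraph_adj_iff_of_lt {n : ℕ} {i j : Fin n} (hij : i < j) :
    (cycleGraph n).Adj i j ↔ j.val = i.val + 1 ∨ (i.val = 0 ∧ j.val + 1 = n) := by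
  rw [cycleGraph_adj', Fin.sub_val_of_le hij.le, Fin.coe_sub_iff_lt.2 hij]
  omega

theorem nonempty_iso_of_forall_lt {α : Type*} [LinearOrder α] {H : SimpleGraph α} (e : α ≃ V)
    (h : ∀ i j, i < j → (G.Adj (e i) (e j) ↔ H.Adj i j)) : Nonempty (G ≃g H) := by
  refine ⟨RelIso.symm ⟨e, fun {i j} => ?_⟩⟩
  rcases lt_trichotomy i j with hij | rfl | hij
  · exact h i j hij
  · simp only [SimpleGraph.irrefl]
  · rw [G.adj_comm, H.adj_comm]
    exact h j i hij

variable {u v : V} {p : G.Walk u v}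

theorem mem_support_of_adj_start_of_longest (hp : p.IsPath)
    (hmax : ∀ (a b : V) (q : G.Walk a b), q.IsPath → q.length ≤ p.length) {w : V}
    (hw : G.Adj u w) : w ∈ p.support := by
  by_contra hwp
  have hlong := hmax _ _ _ (hp.cons hwp (h := hw.symm))
  rw [Walk.length_cons] at hlong
  omega

theorem neighborSet_getVert_of_isPath (hdeg : ∀ x, (G.neighborSet x).encard ≤ 2) (hp : p.IsPath)
    {i : ℕ} (hi : i + 1 < p.length) :
    G.neighborSet (p.getVert (i + 1)) = {p.getVert i, p.getVert (i + 2)} := by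
  have hne : p.getVert i ≠ p.getVert (i + 2) :=
    hp.getVert_injOn.ne (show i ≤ p.length by omega) (show i + 2 ≤ p.length by omega) (by omega)
  have hsub : {p.getVert i, p.getVert (i + 2)} ⊆ G.neighborSet (p.getVert (i + 1)) :=
    Set.pair_subset (p.adj_getVert_succ (by omega)).symm (p.adj_getVert_succ hi)
  refine (Set.Finite.eq_of_subset_of_encard_le (Set.toFinite _) hsub ?_).symm
  rw [Set.encard_pair hne]
  exact hdeg _

theorem eq_succ_or_endpoints_of_adj_getVert (hdeg : ∀ x, (G.neighborSet x).encard ≤ 2)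
    (hp : p.IsPath) {i j : ℕ} (hij : i < j) (hj : j ≤ p.length)
    (hadj : G.Adj (p.getVert i) (p.getVert j)) : j = i + 1 ∨ (i = 0 ∧ j = p.length) := by
  have eq_or_eq {k l : ℕ} (hk : k + 1 < p.length) (hl : l ≤ p.length)
      (h : G.Adj (p.getVert (k + 1)) (p.getVert l)) : l = k ∨ l = k + 2 := by
    rw [← mem_neighborSet, neighborSet_getVert_of_isPath hdeg hp hk] at h
    exact h.imp (hp.getVert_injOn hl (show k ≤ p.length by omega))
      (hp.getVert_injOn hl (show k + 2 ≤ p.length by omega))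
  obtain _ | i := i
  · obtain ⟨k, rfl⟩ := Nat.exists_eq_add_of_lt hij
    by_cases hlast : 0 + k + 1 = p.length
    · exact Or.inr ⟨rfl, hlast⟩
    · have := eq_or_eq (by omega) (by omega) hadj.symm
      omega
  · have := eq_or_eq (by omega) hj hadj
    omega

theorem exists_isHamiltonian_of_forall_encard_neighborSet_le_two [Finite V] [DecidableEq V]
    (hG : G.Connected) (hdeg : ∀ x, (G.neighborSet x).encard ≤ 2) :
    ∃ (u v : V) (p : G.Walk u v), p.IsHamiltonian := by
  have := hG.nonempty
  obtain ⟨u, v, p, hp, hmax⟩ := Walk.exists_isPath_forall_isPath_length_le_length G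
  refine ⟨u, v, p, hp.isHamiltonian_of_mem fun x => ?_⟩
  by_contra hx
  obtain ⟨a, b, hab, ha, hb⟩ :=
    exists_adj_mem_notMem hG (S := {y | y ∈ p.support}) ⟨u, p.start_mem_support⟩ hx
  obtain ⟨i, rfl, hi⟩ := Walk.mem_support_iff_exists_getVert.1 ha
  obtain _ | i := i
  · rw [p.getVert_zero] at hab
    exact hb (mem_support_of_adj_start_of_longest hp hmax hab)
  obtain hi | hi := hi.eq_or_lt
  · rw [hi, p.getVert_length] at hab
    have hbr := mem_support_of_adj_start_of_longest hp.reverse (by rwa [p.length_reverse]) hab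
    rw [p.support_reverse, List.mem_reverse] at hbr
    exact hb hbr
  · rw [← mem_neighborSet, neighborSet_getVert_of_isPath hdeg hp hi] at hab
    obtain rfl | rfl := hab <;> exact hb (p.getVert_mem_support _)

theorem nonempty_iso_pathGraph_or_cycleGraph [Finite V] (hG : G.Connected)
    (hdeg : ∀ x, (G.neighborSet x).encard ≤ 2) :
    ∃ n, Nonempty (G ≃g pathGraph n) ∨ Nonempty (G ≃g cycleGraph n) := by
  classical
  obtain ⟨u, v, p, hp⟩ := exists_isHamiltonian_of_forall_encard_neighborSet_le_two hG hdeg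
  have hlen := p.length_support
  refine ⟨p.support.length, ?_⟩
  -- A single edge falls under the first case, as `cycleGraph 2`.
  by_cases huv : G.Adj u v
  · refine Or.inr (nonempty_iso_of_forall_lt hp.getVertEquiv fun i j hij => ?_)
    rw [cycleGraph_adj_iff_of_lt hij]
    simp only [Walk.IsHamiltonian.getVertEquiv_apply, Function.comp_apply]
    constructor
    · intro h
      have := eq_succ_or_endpoints_of_adj_getVert hdeg hp.isPath hij (by omega) h
      omega
    · rintro (h | ⟨hi, hj⟩)
      · rw [h]
        exact p.adj_getVert_succ (by omega)
      · rwa [hi, p.getVert_zero, show j.val = p.length by omega, p.getVert_length]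
  · refine Or.inl (nonempty_iso_of_forall_lt hp.getVertEquiv fun i j hij => ?_)
    rw [pathGraph_adj]
    simp only [Walk.IsHamiltonian.getVertEquiv_apply, Function.comp_apply]
    constructor
    · intro h
      obtain hsucc | ⟨hi, hj⟩ := eq_succ_or_endpoints_of_adj_getVert hdeg hp.isPath hij (by omega) h
      · exact Or.inl hsucc.symm
      · rw [hi, hj, p.getVert_zero, p.getVert_length] at h
        exact (huv h).elim
    · intro h
      rw [show j.val = i.val + 1 by omega]
      exact p.adj_getVert_succ (by omega)

end MaxDegreeTwo

theorem FGraph.Prolific.exists_three_le_encard_neighborSet {X : FGraph} [Finite X.V]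
    (hX : X.Prolific) : ∃ v, 3 ≤ (X.G.neighborSet v).encard := by
  obtain ⟨hconn, hpath, hcycle, -⟩ := hX
  by_contra! hdeg
  have hdeg' (v : X.V) : (X.G.neighborSet v).encard ≤ 2 := Order.le_of_lt_succ (hdeg v)
  obtain ⟨n, ⟨⟨e⟩⟩ | ⟨⟨e⟩⟩⟩ := nonempty_iso_pathGraph_or_cycleGraph hconn hdeg'
  · exact (hpath n).false e
  · exact (hcycle n).false e

theorem chromaticNumber_index_le_three_general {V : Type*} {G : SimpleGraph V}
    (hG : G.Connected) (hχ : G.chromaticNumber ≠ ⊤) {x : V} (hx : 3 ≤ (G.neighborSet x).encard) :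
    G.chromaticNumber < G.lineGraph.chromaticNumber ∨
      G.chromaticNumber < G.lineGraph.lineGraph.lineGraph.chromaticNumber := by
  obtain ⟨k, hk⟩ := ENat.ne_top_iff_exists.1 hχ
  rw [← hk]
  obtain hk2 | hk3 := Nat.lt_or_ge k 3
  · left
    calc (k : ℕ∞) < 3 := mod_cast hk2
      _ ≤ (G.neighborSet x).encard := hx
      _ ≤ G.lineGraph.chromaticNumber := encard_neighborSet_le_chromaticNumber_lineGraph G x
  · right
    obtain ⟨n, rfl⟩ : ∃ n, k = n + 1 := ⟨k - 1, by omega⟩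
    calc ((n + 1 : ℕ) : ℕ∞) < n + 2 := mod_cast (n + 1).lt_succ_self
      _ ≤ G.lineGraph.lineGraph.lineGraph.chromaticNumber :=
          add_two_le_chromaticNumber_lineGraph_lineGraph_lineGraph hG hx (by omega)
            (hk ▸ mod_cast n.lt_succ_self)

/-- For a prolific graph there is `r` with `1 ≤ r ≤ 3` and `χ(L^r(G)) > χ(G)`. -/
theorem chromaticNumber_index_le_three (X : FGraph) [Finite X.V] (hp : X.Prolific) :
    ∃ r : ℕ, 1 ≤ r ∧ r ≤ 3 ∧ X.G.chromaticNumber < (X.iter r).G.chromaticNumber := by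
  obtain ⟨_, hv⟩ := hp.exists_three_le_encard_neighborSet
  have hχ := chromaticNumber_ne_top_iff_exists.2 ⟨_, colorable_chromaticNumber_of_fintype X.G⟩
  exact (chromaticNumber_index_le_three_general hp.1 hχ hv).elim
    (⟨1, le_rfl, by norm_num, ·⟩) (⟨3, by norm_num, le_rfl, ·⟩)
end
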